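/- Let d ≥ 1, −1 < a < 1, r ≥ 2 and q > 2 with 2/q + d/r = (d+a+1)/2. Then there exists C = C(d,a,r) > 0 such that for every Φ ∈ 𝒮(ℝ^{d+1}): (i) sup_{t∈ℝ} ‖Θ_a^*(Φ)(·,t)‖_{L²_a(ℝ^{d+1}_+)} ≤ C·‖Φ‖_{L^{q'}_tL^{r'}_x}; and (ii) sup_{z>0} ‖Θ_a^*(Φ)(·,z,·)‖_{L^q_tL^r_x} ≤ C·‖Φ‖_{L^{q'}_tL^{r'}_x}. -/

import Mathlib

open MeasureTheory Filter Complex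
open scoped ENNReal NNReal Topology

noncomputable section

/-- Bessel function of the first kind of order `ν`, via its power series. -/
def besselJ (ν : ℝ) (x : ℝ) : ℝ :=
  ∑' k : ℕ, ((-1 : ℝ) ^ k / ((k.factorial : ℝ) * Real.Gamma ((k : ℝ) + ν + 1))) *
    (x / 2) ^ (2 * (k : ℝ) + ν)

/-- The half-line Schrödinger–Bessel kernel `S_a(z,ζ,t)`. -/
def SaK (a : ℝ) (z ζ t : ℝ) : ℂ :=
  (Complex.exp (-Complex.I * ((Real.sign t : ℝ) : ℂ) * (((a + 1) * Real.pi / 4 : ℝ) : ℂ)) /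
      (((2 * |t|) ^ ((a + 1) / 2) : ℝ) : ℂ)) *
    (((z * ζ / (2 * |t|)) ^ ((1 - a) / 2) : ℝ) : ℂ) *
    ((besselJ ((a - 1) / 2) (z * ζ / (2 * |t|)) : ℝ) : ℂ) *
    Complex.exp (Complex.I * ((z ^ 2 + ζ ^ 2 : ℝ) : ℂ) / ((4 * t : ℝ) : ℂ))

/-- The boundary kernel `S_a(z,0,t)`. -/
def Sa0 (a : ℝ) (z t : ℝ) : ℂ :=
  ((((2 : ℝ) ^ (-a) / Real.Gamma ((a + 1) / 2) : ℝ)) : ℂ) *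
    Complex.exp (-Complex.I * ((Real.sign t : ℝ) : ℂ) * (((a + 1) * Real.pi / 4 : ℝ) : ℂ)) *
    (((|t| ^ (-((a + 1) / 2)) : ℝ)) : ℂ) *
    Complex.exp (Complex.I * ((z ^ 2 : ℝ) : ℂ) / ((4 * t : ℝ) : ℂ))

/-- The free Schrödinger kernel on `ℝ^d` (principal branch of the power). -/
def Sfree (d : ℕ) (x y : Fin d → ℝ) (t : ℝ) : ℂ :=
  (4 * (Real.pi : ℂ) * Complex.I * (t : ℂ)) ^ (-(d : ℂ) / 2) *
    Complex.exp (Complex.I * ((∑ i, (x i - y i) ^ 2 : ℝ) : ℂ) / ((4 * t : ℝ) : ℂ))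

/-- The full half-space kernel `𝕊_a(X,Y,t) = S_a(z,ζ,t)·S(x,y,t)`. -/
def SK (d : ℕ) (a : ℝ) (X Y : (Fin d → ℝ) × ℝ) (t : ℝ) : ℂ :=
  SaK a X.2 Y.2 t * Sfree d X.1 Y.1 t

/-- The weighted measure `dω_a = z^a dx dz` on the half-space `ℝ^d × (0,∞)`. -/
def ωa (d : ℕ) (a : ℝ) : Measure ((Fin d → ℝ) × ℝ) :=
  (volume : Measure (Fin d → ℝ)).prod
    (((volume : Measure ℝ).restrict (Set.Ioi 0)).withDensity fun z => ENNReal.ofReal (z ^ a))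

/-- The mixed norm `‖Φ‖_{L^q_t L^r_x}`. -/
def mixNorm (d : ℕ) (q r : ℝ) (Φ : (Fin d → ℝ) → ℝ → ℂ) : ℝ≥0∞ :=
  (∫⁻ t : ℝ, (∫⁻ x : Fin d → ℝ, (‖Φ x t‖₊ : ℝ≥0∞) ^ r) ^ (q / r)) ^ (1 / q)

/-- The mixed norm `‖Φ‖_{L^q_T L^r_x}` over the time interval `[0,T]`. -/
def mixNormT (d : ℕ) (T q r : ℝ) (Φ : (Fin d → ℝ) → ℝ → ℂ) : ℝ≥0∞ :=
  (∫⁻ t in Set.Ioc (0 : ℝ) T, (∫⁻ x : Fin d → ℝ, (‖Φ x t‖₊ : ℝ≥0∞) ^ r) ^ (q / r)) ^ (1 / q)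

/-- The homogeneous propagator `𝕋_a^*(u₀)`. -/
def Tstar (d : ℕ) (a : ℝ) (u₀ : (Fin d → ℝ) × ℝ → ℂ) (X : (Fin d → ℝ) × ℝ) (t : ℝ) : ℂ :=
  if t = 0 then u₀ X else ∫ Y, SK d a X Y t * u₀ Y ∂(ωa d a)

/-- The inhomogeneous Duhamel term `𝔻_a(F)`. -/
def Dop (d : ℕ) (a : ℝ) (F : (Fin d → ℝ) × ℝ → ℝ → ℂ) (X : (Fin d → ℝ) × ℝ) (t : ℝ) : ℂ :=
  ∫ τ in (0 : ℝ)..t, ∫ Y, SK d a X Y (t - τ) * F Y τ ∂(ωa d a)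

/-- The boundary-data operator `Θ_a^*(Φ)`. -/
def ThetaStar (d : ℕ) (a : ℝ) (Φ : (Fin d → ℝ) → ℝ → ℂ) (X : (Fin d → ℝ) × ℝ) (t : ℝ) : ℂ :=
  Complex.I *
    ∫ τ in (0 : ℝ)..t, ∫ y : Fin d → ℝ, Sa0 a X.2 (t - τ) * Sfree d X.1 y (t - τ) * Φ y τ

/-- The weight `k(z) = min{1, z^{a/2}}`. -/
def kwt (a z : ℝ) : ℝ := min 1 (z ^ (a / 2))

/-- The weight `k^{-1}(z) = max{1, z^{-a/2}}`. -/
def kinv (a z : ℝ) : ℝ := max 1 (z ^ (-a / 2))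


theorem lc_fin (q : ℝ) (hq : 0 < q) (x : ℝ) (hx : 0 ≤ x) :
    ENNReal.ofReal q * ∫⁻ l in Set.Ioi (0:ℝ), (Set.Iio x).indicator
      (fun l => ENNReal.ofReal (l ^ (q-1))) l = ENNReal.ofReal (x ^ q) := by
  rw [lintegral_indicator measurableSet_Iio, Measure.restrict_restrict measurableSet_Iio]
  have e : Set.Iio x ∩ Set.Ioi 0 = Set.Ioo 0 x := by ext; simp [and_comm]
  rw [e, restrict_Ioo_eq_restrict_Ioc, ← ofReal_integral_eq_lintegral_ofReal,
    ← intervalIntegral.integral_of_le hx, integral_rpow (Or.inl (by linarith)),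
    ← ENNReal.ofReal_mul hq.le]
  · congr 1
    simp [Real.zero_rpow hq.ne']
    field_simp
  · have := (intervalIntegral.intervalIntegrable_rpow' (a := 0) (b := x) (r := q-1) (by linarith))
    rwa [intervalIntegrable_iff_integrableOn_Ioc_of_le hx] at this
  · filter_upwards [self_mem_ae_restrict measurableSet_Ioc] with l hl
    exact Real.rpow_nonneg hl.1.le _

theorem lc_point (q : ℝ) (hq : 0 < q) (h : ℝ≥0∞) :
    h ^ q ≤ ENNReal.ofReal q * ∫⁻ l in Set.Ioi (0:ℝ), {l : ℝ | ENNReal.ofReal l < h}.indicator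
      (fun l => ENNReal.ofReal (l ^ (q-1))) l := by
  have key : ∀ x : ℝ, 0 ≤ x → ENNReal.ofReal x ≤ h → ENNReal.ofReal x ^ q ≤
      ENNReal.ofReal q * ∫⁻ l in Set.Ioi (0:ℝ), {l : ℝ | ENNReal.ofReal l < h}.indicator
      (fun l => ENNReal.ofReal (l ^ (q-1))) l := by
    intro x hx hxh
    rw [ENNReal.ofReal_rpow_of_nonneg hx hq.le, ← lc_fin q hq x hx]
    refine mul_le_mul' le_rfl (setLIntegral_mono' measurableSet_Ioi ?_)
    intro l hl
    by_cases hlx : l < x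
    · have : ENNReal.ofReal l < h := lt_of_lt_of_le
        ((ENNReal.ofReal_lt_ofReal_iff (lt_trans hl hlx)).2 hlx) hxh
      simp [Set.indicator, hlx, this]
    · simp [Set.indicator, hlx]
  rcases eq_or_ne h ⊤ with rfl | hne
  · refine ENNReal.le_of_forall_nnreal_lt ?_
    intro r hr
    have := key (r ^ (1/q)) (by positivity) le_top
    rw [ENNReal.ofReal_rpow_of_nonneg (by positivity) hq.le, ← Real.rpow_mul (by positivity)] at this
    simpa [hq.ne'] using this
  · have := key h.toReal ENNReal.toReal_nonneg (by rw [ENNReal.ofReal_toReal hne])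
    rwa [ENNReal.ofReal_toReal hne] at this

/-- layer cake, ENNReal version -/
theorem lc_int {α : Type*} [MeasurableSpace α] (μ : Measure α) [SFinite μ] (q : ℝ) (hq : 0 < q)
    (H : α → ℝ≥0∞) (hH : Measurable H) :
    ∫⁻ x, H x ^ q ∂μ ≤ ENNReal.ofReal q * ∫⁻ l in Set.Ioi (0:ℝ),
      ENNReal.ofReal (l ^ (q-1)) * μ {x | ENNReal.ofReal l < H x} := by
  have hm : Measurable (fun p : α × ℝ => {l : ℝ | ENNReal.ofReal l < H p.1}.indicator
      (fun l => ENNReal.ofReal (l ^ (q-1))) p.2) := by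
    have : (fun p : α × ℝ => {l : ℝ | ENNReal.ofReal l < H p.1}.indicator
      (fun l => ENNReal.ofReal (l ^ (q-1))) p.2) = {p : α × ℝ | ENNReal.ofReal p.2 < H p.1}.indicator
      (fun p => ENNReal.ofReal (p.2 ^ (q-1))) := by
      ext p; simp [Set.indicator]
    rw [this]
    exact Measurable.indicator (by fun_prop) (measurableSet_lt (by fun_prop) (by fun_prop))
  calc ∫⁻ x, H x ^ q ∂μ ≤ ∫⁻ x, (ENNReal.ofReal q * ∫⁻ l in Set.Ioi (0:ℝ),
        {l : ℝ | ENNReal.ofReal l < H x}.indicator (fun l => ENNReal.ofReal (l ^ (q-1))) l) ∂μ :=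
        lintegral_mono fun x => lc_point q hq (H x)
    _ = ENNReal.ofReal q * ∫⁻ l in Set.Ioi (0:ℝ), ∫⁻ x,
        {l : ℝ | ENNReal.ofReal l < H x}.indicator (fun l => ENNReal.ofReal (l ^ (q-1))) l ∂μ := by
        rw [lintegral_const_mul' _ _ ENNReal.ofReal_ne_top, lintegral_lintegral_swap hm.aemeasurable]
    _ = _ := by
        congr 1
        refine lintegral_congr fun l => ?_
        rw [← lintegral_indicator_const (measurableSet_lt (by fun_prop) hH)]
        rfl

/-- integral of the truncated kernel near zero -/
theorem ker_near (al R : ℝ) (h1 : al < 1) (hR : 0 < R) :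
    ∫⁻ s : ℝ, (Set.Ioo (-R) R).indicator (fun s => ENNReal.ofReal (|s| ^ (-al))) s
      ≤ ENNReal.ofReal (2 / (1 - al) * R ^ (1 - al)) := by
  rw [lintegral_indicator measurableSet_Ioo]
  have hI : IntervalIntegrable (fun s : ℝ => |s| ^ (-al)) volume 0 R := by
    refine (intervalIntegral.intervalIntegrable_rpow' (r := -al) (by linarith)).congr ?_
    intro s hs
    rw [Set.uIoc_of_le hR.le] at hs
    simp [abs_of_pos hs.1]
  have hI2 : IntervalIntegrable (fun s : ℝ => |s| ^ (-al)) volume (-R) 0 := by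
    have := hI.comp_mul_left (c := -1)
    simp [div_neg] at this
    exact this.symm
  have hI3 := hI2.trans hI
  rw [restrict_Ioo_eq_restrict_Ioc, ← ofReal_integral_eq_lintegral_ofReal,
    ← intervalIntegral.integral_of_le (by linarith)]
  · rw [← intervalIntegral.integral_add_adjacent_intervals hI2 hI]
    have e1 : ∫ s in (0:ℝ)..R, |s| ^ (-al) = R ^ (1 - al) / (1 - al) := by
      have : ∫ s in (0:ℝ)..R, |s| ^ (-al) = ∫ s in (0:ℝ)..R, s ^ (-al) := by
        refine intervalIntegral.integral_congr ?_
        intro s hs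
        rw [Set.uIcc_of_le hR.le] at hs
        simp [abs_of_nonneg hs.1]
      rw [this, integral_rpow (Or.inl (by linarith)), Real.zero_rpow (by linarith)]
      simp [show -al + 1 = 1 - al by ring]
    have e2 : ∫ s in (-R)..0, |s| ^ (-al) = R ^ (1 - al) / (1 - al) := by
      rw [← e1]
      have := intervalIntegral.integral_comp_neg (a := 0) (b := R) (fun s : ℝ => |s| ^ (-al))
      simp only [abs_neg, neg_zero] at this
      rw [this]
    rw [e1, e2]
    apply le_of_eq; congr 1; ring
  · rwa [intervalIntegrable_iff_integrableOn_Ioc_of_le (by linarith)] at hI3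
  · exact Eventually.of_forall fun s => by positivity

/-- integral of the square-inverse tail -/
theorem ker_far (R : ℝ) (hR : 0 < R) :
    ∫⁻ s : ℝ, ((Set.Ioo (-R) R)ᶜ).indicator (fun s => ENNReal.ofReal (|s| ^ (-2:ℝ))) s
      ≤ ENNReal.ofReal (2 / R) := by
  have hp : ∫⁻ s in Set.Ici R, ENNReal.ofReal (|s| ^ (-2:ℝ)) = ENNReal.ofReal (1 / R) := by
    rw [setLIntegral_congr Ioi_ae_eq_Ici.symm,
      setLIntegral_congr_fun (g := fun s => ENNReal.ofReal (s ^ (-2:ℝ))) measurableSet_Ioi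
      (fun s hs => by simp only [abs_of_pos (lt_trans hR hs)]),
      ← ofReal_integral_eq_lintegral_ofReal, integral_Ioi_rpow_of_lt (by norm_num) hR]
    · congr 1
      norm_num [Real.rpow_neg_one]
    · exact integrableOn_Ioi_rpow_of_lt (by norm_num) hR
    · filter_upwards [self_mem_ae_restrict measurableSet_Ioi] with l hl
      exact Real.rpow_nonneg (lt_trans hR hl).le _
  have hn : ∫⁻ s in Set.Iic (-R), ENNReal.ofReal (|s| ^ (-2:ℝ)) = ENNReal.ofReal (1 / R) := by
    rw [← hp, ← lintegral_indicator measurableSet_Iic, ← lintegral_indicator measurableSet_Ici,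
      ← lintegral_neg_eq_self (μ := volume)]
    refine lintegral_congr fun s => ?_
    simp [Set.indicator]
  rw [lintegral_indicator measurableSet_Ioo.compl]
  have : (Set.Ioo (-R) R)ᶜ ⊆ Set.Iic (-R) ∪ Set.Ici R := by
    intro s hs
    simp at hs ⊢
    by_contra! hh
    linarith [hs hh.1]
  calc _ ≤ ∫⁻ s in Set.Iic (-R) ∪ Set.Ici R, ENNReal.ofReal (|s| ^ (-2:ℝ)) :=
        lintegral_mono_set this
    _ ≤ _ := lintegral_union_le _ _ _
    _ = _ := by
      rw [hp, hn, ← ENNReal.ofReal_add (by positivity) (by positivity)]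
      congr 1; ring

def hlsD (q : ℝ) : ℝ := 2 / (1 - 2/q) * (2 * 4 ^ q) ^ (1 - 2/q)

theorem hlsD_pos (q : ℝ) (hq : 2 < q) : 0 < hlsD q := by
  have : 2 / q < 1 := by rw [div_lt_one (by linarith)]; exact hq
  unfold hlsD
  have h : 0 < 1 - 2/q := by linarith
  positivity

theorem hls_step (q : ℝ) (hq : 2 < q) (f : ℝ → ℝ≥0∞) (hf : Measurable f)
    (hn : ∫⁻ x, f x ^ (q / (q-1)) ≤ 1) (l : ℝ) (hl : 0 < l) :
    volume {t : ℝ | ENNReal.ofReal l < ∫⁻ s, ENNReal.ofReal (|t - s| ^ (-(2/q))) * f s} ≤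
      ENNReal.ofReal (2 * hlsD q * l ^ (1 - q)) *
        ∫⁻ x, {x | ENNReal.ofReal (l ^ (q-1) / (4 * hlsD q)) < f x}.indicator f x := by
  have hD := hlsD_pos q hq
  have hq0 : 0 < q := by linarith
  have hal : 2 / q < 1 := by rw [div_lt_one (by linarith)]; exact hq
  set D := hlsD q with hDdef
  set R : ℝ := 2 * (4 / l) ^ q with hRdef
  have hR : 0 < R := by positivity
  set k : ℝ → ℝ≥0∞ := fun s => ENNReal.ofReal (|s| ^ (-(2/q))) with hk
  have hkm : Measurable k := by fun_prop
  set k1 := (Set.Ioo (-R) R).indicator k with hk1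
  set k2 := ((Set.Ioo (-R) R)ᶜ).indicator k with hk2
  have hk1m : Measurable k1 := hkm.indicator measurableSet_Ioo
  have hk2m : Measurable k2 := hkm.indicator measurableSet_Ioo.compl
  set h : ℝ≥0∞ := ENNReal.ofReal (l ^ (q-1) / (4 * D)) with hh
  set f1 := {x | h < f x}.indicator f with hf1
  set f2 := ({x | h < f x}ᶜ).indicator f with hf2
  have hms : MeasurableSet {x | h < f x} := measurableSet_lt measurable_const hf
  have hf1m : Measurable f1 := hf.indicator hms
  have hf2m : Measurable f2 := hf.indicator hms.compl
  have ek : ∀ s, k s = k1 s + k2 s := fun s => by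
    simp only [hk1, hk2]
    exact (congrFun (Set.indicator_self_add_compl (Set.Ioo (-R) R) k) s).symm
  have ef : ∀ s, f s = f1 s + f2 s := fun s => by
    simp only [hf1, hf2]
    exact (congrFun (Set.indicator_self_add_compl {x | h < f x} f) s).symm
  have hf2le : ∀ s, f2 s ≤ h := fun s => by
    simp only [hf2, Set.indicator]
    split_ifs with h1
    · simpa using h1
    · simp
  have hK1 : ∫⁻ s, k1 s ≤ ENNReal.ofReal (D * l ^ (2 - q)) := by
    refine (ker_near (2/q) R hal hR).trans (le_of_eq ?_)
    congr 1
    rw [hRdef, hDdef, hlsD, mul_assoc]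
    congr 1
    rw [Real.div_rpow (by norm_num) hl.le, ← mul_div_assoc, Real.div_rpow (by positivity) (by positivity),
      div_eq_mul_inv, ← Real.rpow_neg (by positivity), ← Real.rpow_mul hl.le]
    congr 2
    field_simp
    ring
  have hK2 : ∫⁻ s, k2 s ^ q ≤ ENNReal.ofReal ((l/4) ^ q) := by
    have e : ∀ s, k2 s ^ q = ((Set.Ioo (-R) R)ᶜ).indicator (fun s => ENNReal.ofReal (|s| ^ (-2:ℝ))) s := by
      intro s
      simp only [hk2, Set.indicator, hk]
      split_ifs
      · rw [ENNReal.ofReal_rpow_of_nonneg (by positivity) hq0.le, ← Real.rpow_mul (abs_nonneg _)]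
        congr 2
        field_simp
      · simp [hq0]
    simp_rw [e]
    refine (ker_far R hR).trans (le_of_eq ?_)
    congr 1
    rw [hRdef, Real.div_rpow (by norm_num) hl.le, Real.div_rpow hl.le (by norm_num)]
    field_simp
  have hpt : ∀ t, ∫⁻ s, k (t - s) * f s ≤ (∫⁻ s, k1 (t - s) * f1 s) + ENNReal.ofReal (l/2) := by
    intro t
    have b1 : ∫⁻ s, k1 (t - s) * f2 s ≤ ENNReal.ofReal (l/4) := by
      calc ∫⁻ s, k1 (t - s) * f2 s ≤ ∫⁻ s, k1 (t - s) * h := by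
            gcongr with s; exact hf2le s
        _ = (∫⁻ s, k1 s) * h := by
            rw [lintegral_mul_const _ (by fun_prop), lintegral_sub_left_eq_self k1 t]
        _ ≤ ENNReal.ofReal (D * l ^ (2 - q)) * ENNReal.ofReal (l ^ (q-1) / (4 * D)) := by gcongr
        _ = _ := by
            rw [← ENNReal.ofReal_mul (by positivity)]
            congr 1
            have : l ^ (2 - q) * l ^ (q - 1) = l := by
              rw [← Real.rpow_add hl]; ring_nf; simp
            field_simp
            linarith
    have b2 : ∫⁻ s, k2 (t - s) * f s ≤ ENNReal.ofReal (l/4) := by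
      have hc : q.HolderConjugate (q / (q-1)) := Real.HolderConjugate.conjExponent (by linarith)
      calc ∫⁻ s, k2 (t - s) * f s ≤ (∫⁻ s, k2 (t - s) ^ q) ^ (1/q) * (∫⁻ s, f s ^ (q/(q-1))) ^ (1/(q/(q-1))) :=
            ENNReal.lintegral_mul_le_Lp_mul_Lq volume hc (by fun_prop) hf.aemeasurable
        _ ≤ (ENNReal.ofReal ((l/4) ^ q)) ^ (1/q) * 1 ^ (1/(q/(q-1))) := by
            rw [lintegral_sub_left_eq_self (fun s => k2 s ^ q) t]
            have : 0 < 1/(q/(q-1)) := by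
              have : 0 < q - 1 := by linarith
              positivity
            gcongr
        _ = _ := by
            rw [ENNReal.one_rpow, mul_one, ENNReal.ofReal_rpow_of_nonneg (by positivity) (by positivity),
              ← Real.rpow_mul (by positivity)]
            simp [hq0.ne']
    calc ∫⁻ s, k (t - s) * f s = ∫⁻ s, (k1 (t-s) * f1 s + k1 (t-s) * f2 s + k2 (t-s) * f s) := by
          refine lintegral_congr fun s => ?_
          rw [ek (t-s), add_mul, ← mul_add, ← ef]
      _ = (∫⁻ s, k1 (t - s) * f1 s) + (∫⁻ s, k1 (t - s) * f2 s) + ∫⁻ s, k2 (t - s) * f s := by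
          rw [lintegral_add_left (by fun_prop), lintegral_add_left (by fun_prop)]
      _ ≤ (∫⁻ s, k1 (t - s) * f1 s) + ENNReal.ofReal (l/4) + ENNReal.ofReal (l/4) := by gcongr
      _ = _ := by
          rw [add_assoc, ← ENNReal.ofReal_add (by positivity) (by positivity)]
          congr 2; ring
  have hsub : {t : ℝ | ENNReal.ofReal l < ∫⁻ s, k (t - s) * f s} ⊆
      {t | ENNReal.ofReal (l/2) ≤ ∫⁻ s, k1 (t - s) * f1 s} := by
    intro t ht
    have h2 := lt_of_lt_of_le ht (hpt t)
    by_contra hcon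
    simp only [Set.mem_ofPred_eq, not_le] at hcon
    have : ENNReal.ofReal l = ENNReal.ofReal (l/2) + ENNReal.ofReal (l/2) := by
      rw [← ENNReal.ofReal_add (by positivity) (by positivity)]; congr 1; ring
    rw [this] at h2
    exact absurd (lt_of_lt_of_le h2 (add_le_add_left hcon.le _)) (lt_irrefl _)
  refine (measure_mono hsub).trans ?_
  have hmm : Measurable (fun t => ∫⁻ s, k1 (t - s) * f1 s) := by
    apply Measurable.lintegral_prod_right'  (f := fun p : ℝ × ℝ => k1 (p.1 - p.2) * f1 p.2)
    fun_prop
  have hmk := mul_meas_ge_le_lintegral (μ := volume) hmm (ENNReal.ofReal (l/2))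
  have hY : ∫⁻ t, ∫⁻ s, k1 (t - s) * f1 s = (∫⁻ s, k1 s) * ∫⁻ s, f1 s := by
    rw [lintegral_lintegral_swap]
    · rw [← lintegral_const_mul _ hf1m]
      refine lintegral_congr fun s => ?_
      rw [lintegral_mul_const _ (by fun_prop), lintegral_sub_right_eq_self k1 s]
    · exact (by fun_prop : Measurable (fun p : ℝ × ℝ => k1 (p.1 - p.2) * f1 p.2)).aemeasurable
  rw [hY] at hmk
  have hl2 : ENNReal.ofReal (2/l) * ENNReal.ofReal (l/2) = 1 := by
    rw [← ENNReal.ofReal_mul (by positivity)]; field_simp; simp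
  calc _ = ENNReal.ofReal (2/l) * (ENNReal.ofReal (l/2) * volume {t | ENNReal.ofReal (l/2) ≤ ∫⁻ s, k1 (t - s) * f1 s}) := by
        rw [← mul_assoc, hl2, one_mul]
    _ ≤ ENNReal.ofReal (2/l) * (ENNReal.ofReal (D * l ^ (2 - q)) * ∫⁻ s, f1 s) := by
        exact mul_le_mul' le_rfl (hmk.trans (mul_le_mul' hK1 le_rfl))
    _ = _ := by
        rw [← mul_assoc, ← ENNReal.ofReal_mul (by positivity)]
        congr 2
        have : l ^ (2 - q) = l * l ^ (1 - q) := by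
          rw [← Real.rpow_one_add' hl.le (by linarith)]; ring_nf
        rw [this]; field_simp

def hlsC (q : ℝ) : ℝ := q * (2 * hlsD q) * (4 * hlsD q) ^ (1/(q-1))

theorem hlsC_pos (q : ℝ) (hq : 2 < q) : 0 < hlsC q := by
  have := hlsD_pos q hq
  unfold hlsC
  positivity

theorem hls_norm (q : ℝ) (hq : 2 < q) (f : ℝ → ℝ≥0∞) (hf : Measurable f) (hfin : ∀ x, f x ≠ ⊤)
    (hn : ∫⁻ x, f x ^ (q / (q-1)) ≤ 1) :
    ∫⁻ t, (∫⁻ s, ENNReal.ofReal (|t - s| ^ (-(2/q))) * f s) ^ q ≤ ENNReal.ofReal (hlsC q) := by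
  have hD := hlsD_pos q hq
  have hq0 : 0 < q := by linarith
  have hq1 : 0 < q - 1 := by linarith
  set D := hlsD q with hDdef
  have hmm : Measurable (fun t => ∫⁻ s, ENNReal.ofReal (|t - s| ^ (-(2/q))) * f s) := by
    apply Measurable.lintegral_prod_right'
      (f := fun p : ℝ × ℝ => ENNReal.ofReal (|p.1 - p.2| ^ (-(2/q))) * f p.2)
    fun_prop
  refine (lc_int volume q hq0 _ hmm).trans ?_
  set g : ℝ → ℝ → ℝ≥0∞ := fun l x => {x | ENNReal.ofReal (l ^ (q-1) / (4 * D)) < f x}.indicator f x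
    with hg
  have hgm : Measurable (fun p : ℝ × ℝ => g p.1 p.2) := by
    have : (fun p : ℝ × ℝ => g p.1 p.2) =
      {p : ℝ × ℝ | ENNReal.ofReal (p.1 ^ (q-1) / (4 * D)) < f p.2}.indicator (fun p => f p.2) := by
      ext p; simp [hg, Set.indicator]
    rw [this]
    exact Measurable.indicator (by fun_prop) (measurableSet_lt (by fun_prop) (by fun_prop))
  calc _ ≤ ENNReal.ofReal q * ∫⁻ l in Set.Ioi (0:ℝ), ENNReal.ofReal (2 * D) * ∫⁻ x, g l x := by
        refine mul_le_mul' le_rfl (setLIntegral_mono' measurableSet_Ioi ?_)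
        intro l hl
        have hl : 0 < l := hl
        refine (mul_le_mul' le_rfl (hls_step q hq f hf hn l hl)).trans (le_of_eq ?_)
        rw [← mul_assoc, ← ENNReal.ofReal_mul (by positivity)]
        congr 2
        have : l ^ (q - 1) * l ^ (1 - q) = 1 := by
          rw [← Real.rpow_add hl]; simp
        linear_combination (2 * D) * this
    _ = ENNReal.ofReal q * (ENNReal.ofReal (2 * D) * ∫⁻ x, ∫⁻ l in Set.Ioi (0:ℝ), g l x) := by
        rw [lintegral_const_mul' _ _ ENNReal.ofReal_ne_top, lintegral_lintegral_swap hgm.aemeasurable]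
    _ ≤ ENNReal.ofReal q * (ENNReal.ofReal (2 * D) * ∫⁻ x, ENNReal.ofReal ((4 * D) ^ (1/(q-1))) * f x ^ (q/(q-1))) := by
        refine mul_le_mul' le_rfl (mul_le_mul' le_rfl (lintegral_mono fun x => ?_))
        set y := (f x).toReal with hy
        have hfy : f x = ENNReal.ofReal y := (ENNReal.ofReal_toReal (hfin x)).symm
        have hy0 : 0 ≤ y := ENNReal.toReal_nonneg
        have : ∀ l ∈ Set.Ioi (0:ℝ), g l x ≤ (Set.Ioo 0 ((4 * D * y) ^ (1/(q-1)))).indicator (fun _ => f x) l := by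
          intro l hl
          have hl : 0 < l := hl
          simp only [hg, Set.indicator, Set.mem_ofPred_eq]
          split_ifs with h1 h2
          · exact le_rfl
          · exfalso
            apply h2
            refine ⟨hl, ?_⟩
            rw [hfy] at h1
            have h3 := ((ENNReal.ofReal_lt_ofReal_iff_of_nonneg (by positivity)).1 h1)
            rw [div_lt_iff₀ (by positivity)] at h3
            have : l = (l ^ (q-1)) ^ (1/(q-1)) := by
              rw [← Real.rpow_mul hl.le]; field_simp; simp
            rw [this]
            apply Real.rpow_lt_rpow (by positivity) (by linarith) (by positivity)
          · simp
          · simp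
        refine (setLIntegral_mono' measurableSet_Ioi this).trans ?_
        rw [lintegral_indicator_const measurableSet_Ioo]
        refine (mul_le_mul' le_rfl (Measure.restrict_apply_le _ _)).trans (le_of_eq ?_)
        rw [Real.volume_Ioo, hfy, sub_zero, ← ENNReal.ofReal_mul hy0, ENNReal.ofReal_rpow_of_nonneg hy0 (by positivity),
          ← ENNReal.ofReal_mul (by positivity)]
        congr 1
        rw [Real.mul_rpow (by positivity) hy0]
        have : y ^ (q/(q-1)) = y * y ^ (1/(q-1)) := by
          rw [← Real.rpow_one_add' hy0 (by positivity)]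
          congr 1; field_simp; ring
        rw [this]; ring
    _ ≤ ENNReal.ofReal q * (ENNReal.ofReal (2 * D) * (ENNReal.ofReal ((4 * D) ^ (1/(q-1))) * 1)) := by
        rw [lintegral_const_mul' _ _ ENNReal.ofReal_ne_top]
        gcongr
    _ = _ := by
        rw [mul_one, ← ENNReal.ofReal_mul (by positivity), ← ENNReal.ofReal_mul (by positivity), hlsC, ← hDdef]
        congr 1; ring

theorem hls (q : ℝ) (hq : 2 < q) (f : ℝ → ℝ≥0∞) (hf : Measurable f) (hfin : ∀ x, f x ≠ ⊤) :
    (∫⁻ t, (∫⁻ s, ENNReal.ofReal (|t - s| ^ (-(2/q))) * f s) ^ q) ^ (1/q)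
      ≤ ENNReal.ofReal (hlsC q ^ (1/q)) * (∫⁻ x, f x ^ (q / (q-1))) ^ (1/(q/(q-1))) := by
  have hC := hlsC_pos q hq
  have hq0 : 0 < q := by linarith
  have hq1 : 0 < q - 1 := by linarith
  have hp : 0 < q / (q-1) := by positivity
  set N := (∫⁻ x, f x ^ (q / (q-1))) ^ (1/(q/(q-1))) with hN
  rcases eq_or_ne N ⊤ with h | hNt
  · rw [h, ENNReal.mul_top]
    · exact le_top
    · simp; positivity
  rcases eq_or_ne N 0 with h | hN0
  · have h0 : ∫⁻ x, f x ^ (q / (q-1)) = 0 := by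
      rw [hN, ENNReal.rpow_eq_zero_iff_of_pos (by positivity)] at h
      exact h
    rw [lintegral_eq_zero_iff (by fun_prop)] at h0
    have hf0 : f =ᵐ[volume] 0 := by
      filter_upwards [h0] with x hx
      simpa [ENNReal.rpow_eq_zero_iff_of_pos hp] using hx
    have : ∀ t, ∫⁻ s, ENNReal.ofReal (|t - s| ^ (-(2/q))) * f s = 0 := by
      intro t
      rw [lintegral_eq_zero_iff (by fun_prop)]
      filter_upwards [hf0] with x hx
      simp [hx]
    simp [this, hq0]
  have key := hls_norm q hq (fun x => N⁻¹ * f x) (by fun_prop)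
    (fun x => ENNReal.mul_ne_top (ENNReal.inv_ne_top.2 hN0) (hfin x)) (by
      simp_rw [ENNReal.mul_rpow_of_nonneg _ _ hp.le]
      rw [lintegral_const_mul _ (by fun_prop)]
      have : ∫⁻ x, f x ^ (q / (q-1)) = N ^ (q/(q-1)) := by
        rw [hN, ← ENNReal.rpow_mul];
        rw [one_div_mul_cancel hp.ne', ENNReal.rpow_one]
      rw [this, ← ENNReal.mul_rpow_of_nonneg _ _ hp.le, ENNReal.inv_mul_cancel hN0 hNt]
      simp)
  have e : ∀ t, ∫⁻ s, ENNReal.ofReal (|t - s| ^ (-(2/q))) * (N⁻¹ * f s) =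
      N⁻¹ * ∫⁻ s, ENNReal.ofReal (|t - s| ^ (-(2/q))) * f s := by
    intro t
    rw [← lintegral_const_mul _ (by fun_prop)]
    refine lintegral_congr fun s => by ring
  simp_rw [e, ENNReal.mul_rpow_of_nonneg _ _ hq0.le] at key
  rw [lintegral_const_mul' _ _ (ENNReal.rpow_ne_top_of_nonneg hq0.le (ENNReal.inv_ne_top.2 hN0))] at key
  have k2 := ENNReal.rpow_le_rpow key (by positivity : 0 ≤ 1/q)
  rw [ENNReal.mul_rpow_of_nonneg _ _ (by positivity), ← ENNReal.rpow_mul, mul_one_div_cancel hq0.ne',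
    ENNReal.rpow_one, ENNReal.ofReal_rpow_of_nonneg hC.le (by positivity)] at k2
  calc _ = N * (N⁻¹ * (∫⁻ t, (∫⁻ s, ENNReal.ofReal (|t - s| ^ (-(2/q))) * f s) ^ q) ^ (1/q)) := by
        rw [← mul_assoc, ENNReal.mul_inv_cancel hN0 hNt, one_mul]
    _ ≤ N * _ := mul_le_mul' le_rfl k2
    _ = _ := mul_comm _ _

theorem mink {α β : Type*} [MeasurableSpace α] [MeasurableSpace β] (μ : Measure α) (ν : Measure β)
    [SFinite μ] [SFinite ν] (r : ℝ) (hr : 1 < r) (h : α → β → ℝ≥0∞)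
    (hm : Measurable (fun p : α × β => h p.1 p.2)) :
    (∫⁻ x, (∫⁻ s, h x s ∂ν) ^ r ∂μ) ^ (1/r) ≤ ∫⁻ s, (∫⁻ x, h x s ^ r ∂μ) ^ (1/r) ∂ν := by
  have hr0 : 0 < r := by linarith
  have hr1 : 0 < r - 1 := by linarith
  set m : β → ℝ≥0∞ := fun s => (∫⁻ x, h x s ^ r ∂μ) ^ (1/r) with hmdef
  have hmm : Measurable m := by
    apply Measurable.pow_const
    exact Measurable.lintegral_prod_left' (f := fun p : α × β => h p.1 p.2 ^ r) (by fun_prop)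
  set M := ∫⁻ s, m s ∂ν with hM
  rcases eq_or_ne M ⊤ with hMt | hMt
  · rw [hMt]; exact le_top
  have hx : ∀ s, Measurable (fun x => h x s) := fun s => hm.comp (by fun_prop : Measurable fun x : α => (x, s))
  have hs : ∀ x, Measurable (fun s => h x s) := fun x => hm.comp (by fun_prop : Measurable fun s : β => (x, s))
  have hmr : ∀ s, m s ^ r = ∫⁻ x, h x s ^ r ∂μ := fun s => by
    simp only [hmdef]
    rw [← ENNReal.rpow_mul, one_div_mul_cancel hr0.ne', ENNReal.rpow_one]
  have hae : ∀ᵐ x ∂μ, ∀ᵐ s ∂ν, m s = 0 → h x s = 0 := by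
    rw [Measure.ae_ae_comm]
    · refine Eventually.of_forall fun s => ?_
      by_cases h0 : m s = 0
      · have := hmr s
        rw [h0, ENNReal.zero_rpow_of_pos hr0, eq_comm, lintegral_eq_zero_iff ((hx s).pow_const r)] at this
        filter_upwards [this] with x hx _
        simpa [ENNReal.rpow_eq_zero_iff_of_pos hr0] using hx
      · exact Eventually.of_forall fun x h1 => absurd h1 h0
    · have : {p : α × β | m p.2 = 0 → h p.1 p.2 = 0} = {p : α × β | m p.2 = 0}ᶜ ∪ {p | h p.1 p.2 = 0} := by
        ext p; simp [imp_iff_not_or]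
      rw [this]
      exact ((measurableSet_eq_fun (by fun_prop) (by fun_prop)).compl).union
        (measurableSet_eq_fun (by fun_prop) (by fun_prop))
  have hfin : ∀ᵐ s ∂ν, m s ≠ ⊤ := by
    filter_upwards [ae_lt_top hmm hMt] with s hs using hs.ne
  have hc : r.HolderConjugate (r / (r-1)) := Real.HolderConjugate.conjExponent hr
  have hb : ∀ᵐ x ∂μ, (∫⁻ s, h x s ∂ν) ^ r ≤ (∫⁻ s, h x s ^ r * m s ^ (-(r-1)) ∂ν) * M ^ (r-1) := by
    filter_upwards [hae] with x hxx
    have e1 : ∫⁻ s, h x s ∂ν = ∫⁻ s, (h x s * m s ^ (-((r-1)/r))) * m s ^ ((r-1)/r) ∂ν := by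
      refine lintegral_congr_ae ?_
      filter_upwards [hxx, hfin] with s h1 h2
      by_cases h0 : m s = 0
      · simp [h1 h0]
      · rw [mul_assoc, ← ENNReal.rpow_add _ _ h0 h2]; simp
    have e2 := ENNReal.lintegral_mul_le_Lp_mul_Lq ν hc (f := fun s => h x s * m s ^ (-((r-1)/r)))
      (g := fun s => m s ^ ((r-1)/r)) (by have := hs x; fun_prop) (by fun_prop)
    rw [e1]
    refine (ENNReal.rpow_le_rpow e2 hr0.le).trans (le_of_eq ?_)
    rw [ENNReal.mul_rpow_of_nonneg _ _ hr0.le, ← ENNReal.rpow_mul, one_div_mul_cancel hr0.ne', ENNReal.rpow_one,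
      ← ENNReal.rpow_mul]
    congr 1
    · refine lintegral_congr fun s => ?_
      rw [ENNReal.mul_rpow_of_nonneg _ _ hr0.le, ← ENNReal.rpow_mul]
      congr 2; field_simp
    · congr 1
      · refine lintegral_congr fun s => ?_
        rw [← ENNReal.rpow_mul]
        have : (r-1)/r * (r/(r-1)) = 1 := by field_simp
        rw [this, ENNReal.rpow_one]
      · field_simp
  have main : ∫⁻ x, (∫⁻ s, h x s ∂ν) ^ r ∂μ ≤ M ^ r := by
    refine (lintegral_mono_ae hb).trans ?_
    rw [lintegral_mul_const' _ _ (ENNReal.rpow_ne_top_of_nonneg hr1.le hMt), lintegral_lintegral_swap (by fun_prop)]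
    have : ∀ s, ∫⁻ x, h x s ^ r * m s ^ (-(r-1)) ∂μ ≤ m s := by
      intro s
      rw [lintegral_mul_const _ ((hx s).pow_const r), ← hmr]
      by_cases h0 : m s = 0
      · simp [h0, hr0]
      by_cases h1 : m s = ⊤
      · simp [h1]
      · rw [← ENNReal.rpow_add _ _ h0 h1]; simp
    calc _ ≤ M * M ^ (r-1) := mul_le_mul' (lintegral_mono this) le_rfl
      _ = M ^ r := by
        by_cases h0 : M = 0
        · simp [h0, hr0]
        nth_rewrite 1 [← ENNReal.rpow_one M]
        rw [← ENNReal.rpow_add _ _ h0 hMt]; simp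
  calc _ ≤ (M ^ r) ^ (1/r) := ENNReal.rpow_le_rpow main (by positivity)
    _ = M := by rw [← ENNReal.rpow_mul, mul_one_div_cancel hr0.ne', ENNReal.rpow_one]

theorem interp_norm {α β : Type*} [MeasurableSpace α] [MeasurableSpace β] (μ : Measure α) (ν : Measure β)
    [SFinite μ] [SFinite ν] (T : (α → ℂ) → β → ℂ) (A : ℝ) (hA : 0 < A) (r : ℝ) (hr : 2 < r)
    (hTm : ∀ f, Measurable f → Integrable f μ → Measurable (T f))
    (hadd : ∀ f g, Integrable f μ → Integrable g μ → ∀ x, T (fun y => f y + g y) x = T f x + T g x)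
    (h1 : ∀ f, Integrable f μ → ∀ x, ‖T f x‖ₑ ≤ ENNReal.ofReal A * ∫⁻ y, ‖f y‖ₑ ∂μ)
    (h2 : ∀ f, Measurable f → Integrable f μ → ∫⁻ x, ‖T f x‖ₑ ^ (2:ℝ) ∂ν ≤ ∫⁻ y, ‖f y‖ₑ ^ (2:ℝ) ∂μ)
    (f : α → ℂ) (hf : Measurable f) (hfi : Integrable f μ)
    (hn : ∫⁻ y, ‖f y‖ₑ ^ (r/(r-1)) ∂μ ≤ 1) :
    ∫⁻ x, ‖T f x‖ₑ ^ r ∂ν ≤ ENNReal.ofReal (4 * r / (r-2) * (2*A) ^ (r-2)) := by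
  have hr0 : 0 < r := by linarith
  have hr1 : 0 < r - 1 := by linarith
  have hr2 : 0 < r - 2 := by linarith
  have hTf := hTm f hf hfi
  refine (lc_int ν r hr0 (fun x => ‖T f x‖ₑ) (by fun_prop)).trans ?_
  set y : α → ℝ := fun x => ‖f x‖ ^ (1/(r-1)) with hy
  have hym : Measurable y := by fun_prop
  have hy0 : ∀ x, 0 ≤ y x := fun x => by simp only [hy]; positivity
  set S : ℝ → Set α := fun l => {x | 2 * A ≤ l * y x} with hS
  have hSm : ∀ l, MeasurableSet (S l) := fun l => measurableSet_le (by fun_prop) (by fun_prop)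
  set g : ℝ → α → ℝ≥0∞ := fun l x => ENNReal.ofReal (l ^ (r-2-1)) * ((S l)ᶜ).indicator (fun x => ‖f x‖ₑ ^ (2:ℝ)) x with hg
  have hgm : Measurable (fun p : ℝ × α => g p.1 p.2) := by
    have : (fun p : ℝ × α => g p.1 p.2) = fun p => ENNReal.ofReal (p.1 ^ (r-2-1)) *
      ({p : ℝ × α | 2 * A ≤ p.1 * y p.2}ᶜ).indicator (fun p => ‖f p.2‖ₑ ^ (2:ℝ)) p := by
      ext p; simp [hg, Set.indicator, hS]
    rw [this]
    exact Measurable.mul (by fun_prop) (Measurable.indicator (by fun_prop) (measurableSet_le (by fun_prop) (by fun_prop)).compl)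
  have step : ∀ l : ℝ, 0 < l → ENNReal.ofReal (l ^ (r-1)) * ν {x | ENNReal.ofReal l < ‖T f x‖ₑ} ≤
      4 * ∫⁻ x, g l x ∂μ := by
    intro l hl
    set f1 := (S l).indicator f with hf1
    set f2 := ((S l)ᶜ).indicator f with hf2
    have ef : f = fun x => f1 x + f2 x := by
      ext x; exact (congrFun (Set.indicator_self_add_compl (S l) f) x).symm
    have hf1i : Integrable f1 μ := hfi.indicator (hSm l)
    have hf2i : Integrable f2 μ := hfi.indicator (hSm l).compl
    have hf2m : Measurable f2 := hf.indicator (hSm l).compl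
    have hTf2 := hTm f2 hf2m hf2i
    have hf1n : ∫⁻ x, ‖f1 x‖ₑ ∂μ ≤ ENNReal.ofReal (l / (2*A)) := by
      calc ∫⁻ x, ‖f1 x‖ₑ ∂μ ≤ ∫⁻ x, ENNReal.ofReal (l / (2*A)) * ‖f x‖ₑ ^ (r/(r-1)) ∂μ := by
            refine lintegral_mono fun x => ?_
            simp only [hf1, Set.indicator]
            split_ifs with hx
            · rw [← ofReal_norm, ENNReal.ofReal_rpow_of_nonneg (norm_nonneg _) (by positivity),
                ← ENNReal.ofReal_mul (by positivity)]
              apply ENNReal.ofReal_le_ofReal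
              have : ‖f x‖ ^ (r/(r-1)) = ‖f x‖ * y x := by
                simp only [hy]
                rw [← Real.rpow_one_add' (norm_nonneg _) (by positivity)]
                congr 1; field_simp; ring
              rw [this]
              have hx : 2 * A ≤ l * y x := hx
              have hx2 : 1 ≤ l / (2*A) * y x := by
                rw [div_mul_eq_mul_div, le_div_iff₀ (by positivity)]; linarith
              nlinarith [norm_nonneg (f x)]
            · simp
        _ ≤ _ := by
            rw [lintegral_const_mul' _ _ ENNReal.ofReal_ne_top]
            calc _ ≤ ENNReal.ofReal (l / (2*A)) * 1 := by gcongr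
              _ = _ := mul_one _
    have hT1 : ∀ x, ‖T f1 x‖ₑ ≤ ENNReal.ofReal (l/2) := fun x => by
      refine (h1 f1 hf1i x).trans ((mul_le_mul' le_rfl hf1n).trans (le_of_eq ?_))
      rw [← ENNReal.ofReal_mul hA.le]; congr 1; field_simp
    have hsub : {x | ENNReal.ofReal l < ‖T f x‖ₑ} ⊆
        {x | ENNReal.ofReal (l/2) ^ (2:ℝ) ≤ ‖T f2 x‖ₑ ^ (2:ℝ)} := by
      intro x hx
      have hx : ENNReal.ofReal l < ‖T f x‖ₑ := hx
      by_contra hcon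
      simp only [Set.mem_ofPred_eq, not_le] at hcon
      rw [ENNReal.rpow_lt_rpow_iff (by norm_num)] at hcon
      have h3 : ‖T f x‖ₑ ≤ ENNReal.ofReal (l/2) + ENNReal.ofReal (l/2) := by
        rw [ef, hadd f1 f2 hf1i hf2i]
        exact (enorm_add_le _ _).trans (add_le_add (hT1 x) hcon.le)
      rw [← ENNReal.ofReal_add (by positivity) (by positivity), add_halves] at h3
      exact absurd (lt_of_lt_of_le hx h3) (lt_irrefl _)
    have hmk := mul_meas_ge_le_lintegral (μ := ν) (f := fun x => ‖T f2 x‖ₑ ^ (2:ℝ)) (by fun_prop) (ENNReal.ofReal (l/2) ^ (2:ℝ))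
    have hmk2 := (mul_le_mul' le_rfl (measure_mono hsub)).trans (hmk.trans (h2 f2 hf2m hf2i))
    have eg : ∫⁻ x, g l x ∂μ = ENNReal.ofReal (l ^ (r-2-1)) * ∫⁻ x, ‖f2 x‖ₑ ^ (2:ℝ) ∂μ := by
      simp only [hg]
      rw [lintegral_const_mul' _ _ ENNReal.ofReal_ne_top]
      congr 1
      refine lintegral_congr fun x => ?_
      simp only [hf2, Set.indicator]
      split_ifs <;> simp
    rw [eg]
    calc _ = 4 * (ENNReal.ofReal (l ^ (r-2-1)) * (ENNReal.ofReal (l/2) ^ (2:ℝ) * ν {x | ENNReal.ofReal l < ‖T f x‖ₑ})) := by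
          rw [← mul_assoc, ← mul_assoc]
          congr 1
          rw [show (4:ℝ≥0∞) = ENNReal.ofReal 4 by simp, ENNReal.ofReal_rpow_of_nonneg (by positivity) (by norm_num),
            ← ENNReal.ofReal_mul (by norm_num), ← ENNReal.ofReal_mul (by positivity)]
          congr 1
          have : l ^ (r-1) = l ^ (r-2-1) * l ^ (2:ℝ) := by
            rw [← Real.rpow_add hl]; congr 1; ring
          rw [this, Real.div_rpow hl.le (by norm_num)]
          norm_num
          ring
      _ ≤ _ := mul_le_mul' le_rfl (mul_le_mul' le_rfl hmk2)
  have hpt : ∀ x, ENNReal.ofReal (r-2) * ∫⁻ l in Set.Ioi (0:ℝ), g l x ≤ ENNReal.ofReal ((2*A) ^ (r-2)) * ‖f x‖ₑ ^ (r/(r-1)) := by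
    intro x
    by_cases hfx : f x = 0
    · have h0 : ∀ l, g l x = 0 := fun l => by simp only [hg, Set.indicator]; split_ifs <;> simp [hfx]
      simp [h0]
    have hfp : 0 < ‖f x‖ := norm_pos_iff.2 hfx
    have hyp : 0 < y x := by simp only [hy]; positivity
    have e : ∀ l, g l x = ‖f x‖ₑ ^ (2:ℝ) * (Set.Iio (2*A / y x)).indicator (fun l => ENNReal.ofReal (l ^ (r-2-1))) l := by
      intro l
      simp only [hg, Set.indicator, hS, Set.mem_compl_iff, Set.mem_ofPred_eq, not_le, Set.mem_Iio, lt_div_iff₀ hyp]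
      split_ifs
      · ring
      · simp
    simp_rw [e]
    rw [lintegral_const_mul' _ _ (by simp), mul_left_comm, lc_fin (r-2) hr2 _ (by positivity), ← ofReal_norm,
      ENNReal.ofReal_rpow_of_nonneg (norm_nonneg _) (by positivity),
      ENNReal.ofReal_rpow_of_nonneg (norm_nonneg _) (by positivity),
      ← ENNReal.ofReal_mul (by positivity), ← ENNReal.ofReal_mul (by positivity)]
    apply le_of_eq
    congr 1
    rw [Real.div_rpow (by positivity) hyp.le, mul_comm, div_mul_eq_mul_div, mul_div_assoc]
    congr 1
    simp only [hy]
    rw [← Real.rpow_mul (norm_nonneg _), ← Real.rpow_sub hfp]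
    congr 1
    field_simp
    ring
  have hcz : ENNReal.ofReal (r-2) ≠ 0 := by simpa using hr
  calc _ ≤ ENNReal.ofReal r * ∫⁻ l in Set.Ioi (0:ℝ), 4 * ∫⁻ x, g l x ∂μ :=
        mul_le_mul' le_rfl (setLIntegral_mono' measurableSet_Ioi fun l hl => step l hl)
    _ = ENNReal.ofReal r * (4 * ∫⁻ x, (∫⁻ l in Set.Ioi (0:ℝ), g l x) ∂μ) := by
        rw [lintegral_const_mul' _ _ (by simp), lintegral_lintegral_swap hgm.aemeasurable]
    _ = ENNReal.ofReal (4 * r / (r-2)) * ∫⁻ x, (ENNReal.ofReal (r-2) * ∫⁻ l in Set.Ioi (0:ℝ), g l x) ∂μ := by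
        rw [lintegral_const_mul' _ _ (by simp), ← mul_assoc, ← mul_assoc, ← ENNReal.ofReal_mul (by positivity),
          show (4:ℝ≥0∞) = ENNReal.ofReal 4 by simp, ← ENNReal.ofReal_mul (by positivity)]
        congr 2
        field_simp
    _ ≤ ENNReal.ofReal (4 * r / (r-2)) * ∫⁻ x, ENNReal.ofReal ((2*A) ^ (r-2)) * ‖f x‖ₑ ^ (r/(r-1)) ∂μ :=
        mul_le_mul' le_rfl (lintegral_mono hpt)
    _ ≤ ENNReal.ofReal (4 * r / (r-2)) * (ENNReal.ofReal ((2*A) ^ (r-2)) * 1) := by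
        rw [lintegral_const_mul' _ _ (by simp)]
        gcongr
    _ = _ := by
        rw [mul_one, ← ENNReal.ofReal_mul (by positivity)]

theorem interp {α β : Type*} [MeasurableSpace α] [MeasurableSpace β] (μ : Measure α) (ν : Measure β)
    [SFinite μ] [SFinite ν] (T : (α → ℂ) → β → ℂ) (A : ℝ) (hA : 0 < A) (r : ℝ) (hr : 2 < r)
    (hTm : ∀ f, Measurable f → Integrable f μ → Measurable (T f))
    (hadd : ∀ f g, Integrable f μ → Integrable g μ → ∀ x, T (fun y => f y + g y) x = T f x + T g x)
    (hsmul : ∀ (c : ℂ) f x, T (fun y => c * f y) x = c * T f x)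
    (h1 : ∀ f, Integrable f μ → ∀ x, ‖T f x‖ₑ ≤ ENNReal.ofReal A * ∫⁻ y, ‖f y‖ₑ ∂μ)
    (h2 : ∀ f, Measurable f → Integrable f μ → ∫⁻ x, ‖T f x‖ₑ ^ (2:ℝ) ∂ν ≤ ∫⁻ y, ‖f y‖ₑ ^ (2:ℝ) ∂μ)
    (f : α → ℂ) (hf : Measurable f) (hfi : Integrable f μ) :
    (∫⁻ x, ‖T f x‖ₑ ^ r ∂ν) ^ (1/r) ≤ ENNReal.ofReal ((4 * r / (r-2) * (2*A) ^ (r-2)) ^ (1/r)) *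
      (∫⁻ y, ‖f y‖ₑ ^ (r/(r-1)) ∂μ) ^ (1/(r/(r-1))) := by
  have hr0 : 0 < r := by linarith
  have hr1 : 0 < r - 1 := by linarith
  have hr2 : 0 < r - 2 := by linarith
  have hp : 0 < r / (r-1) := by positivity
  set N := (∫⁻ x, ‖f x‖ₑ ^ (r / (r-1)) ∂μ) ^ (1/(r/(r-1))) with hN
  rcases eq_or_ne N ⊤ with h | hNt
  · rw [h, ENNReal.mul_top]
    · exact le_top
    · simp; positivity
  rcases eq_or_ne N 0 with h | hN0
  · have h0 : ∫⁻ x, ‖f x‖ₑ ^ (r / (r-1)) ∂μ = 0 := by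
      rw [hN, ENNReal.rpow_eq_zero_iff_of_pos (by positivity)] at h
      exact h
    rw [lintegral_eq_zero_iff (by fun_prop)] at h0
    have hf0 : ∫⁻ y, ‖f y‖ₑ ∂μ = 0 := by
      rw [lintegral_eq_zero_iff (by fun_prop)]
      filter_upwards [h0] with x hx
      simpa [ENNReal.rpow_eq_zero_iff_of_pos hp] using hx
    have : ∀ x, ‖T f x‖ₑ = 0 := fun x => by
      have := h1 f hfi x
      rw [hf0, mul_zero] at this
      exact le_antisymm this (zero_le)
    simp [this, hr0]
  set c : ℂ := (((N.toReal)⁻¹ : ℝ) : ℂ) with hc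
  have hNp : 0 < N.toReal := ENNReal.toReal_pos hN0 hNt
  have hce : ‖c‖ₑ = N⁻¹ := by
    rw [← ofReal_norm, hc, Complex.norm_real, Real.norm_of_nonneg (by positivity), ENNReal.ofReal_inv_of_pos hNp,
      ENNReal.ofReal_toReal hNt]
  have key := interp_norm μ ν T A hA r hr hTm hadd h1 h2 (fun x => c * f x) (by fun_prop)
    (hfi.const_mul c) (by
      simp_rw [enorm_mul, ENNReal.mul_rpow_of_nonneg _ _ hp.le, hce]
      rw [lintegral_const_mul _ (by fun_prop)]
      have : ∫⁻ x, ‖f x‖ₑ ^ (r / (r-1)) ∂μ = N ^ (r/(r-1)) := by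
        rw [hN, ← ENNReal.rpow_mul]
        rw [one_div_mul_cancel hp.ne', ENNReal.rpow_one]
      rw [this, ← ENNReal.mul_rpow_of_nonneg _ _ hp.le, ENNReal.inv_mul_cancel hN0 hNt]
      simp)
  simp_rw [hsmul, enorm_mul, ENNReal.mul_rpow_of_nonneg _ _ hr0.le, hce] at key
  rw [lintegral_const_mul' _ _ (ENNReal.rpow_ne_top_of_nonneg hr0.le (ENNReal.inv_ne_top.2 hN0))] at key
  have k2 := ENNReal.rpow_le_rpow key (by positivity : 0 ≤ 1/r)
  rw [ENNReal.mul_rpow_of_nonneg _ _ (by positivity), ← ENNReal.rpow_mul, mul_one_div_cancel hr0.ne',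
    ENNReal.rpow_one, ENNReal.ofReal_rpow_of_nonneg (by positivity) (by positivity)] at k2
  calc _ = N * (N⁻¹ * (∫⁻ x, ‖T f x‖ₑ ^ r ∂ν) ^ (1/r)) := by
        rw [← mul_assoc, ENNReal.mul_inv_cancel hN0 hNt, one_mul]
    _ ≤ N * _ := mul_le_mul' le_rfl k2
    _ = _ := mul_comm _ _

theorem fatou_w {α : Type*} [MeasurableSpace α] (μ : Measure α) (w : α → ℝ) (hw : Measurable w)
    (H : α → ℝ≥0∞) (hH : Measurable H) (R : ℝ≥0∞)
    (h : ∀ δ : ℝ, 0 < δ → ∫⁻ x, ENNReal.ofReal (Real.exp (-(δ * w x))) * H x ∂μ ≤ R) :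
    ∫⁻ x, H x ∂μ ≤ R := by
  have hlim : ∀ x, liminf (fun n : ℕ => ENNReal.ofReal (Real.exp (-((1/((n:ℝ)+1)) * w x))) * H x) atTop = H x := by
    intro x
    apply Tendsto.liminf_eq
    have h1 : Tendsto (fun n : ℕ => ENNReal.ofReal (Real.exp (-((1/((n:ℝ)+1)) * w x)))) atTop (𝓝 1) := by
      have : Tendsto (fun n : ℕ => Real.exp (-((1/((n:ℝ)+1)) * w x))) atTop (𝓝 (Real.exp (-(0 * w x)))) :=
        (Real.continuous_exp.tendsto _).comp ((tendsto_one_div_add_atTop_nhds_zero_nat.mul_const _).neg)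
      simpa using ENNReal.tendsto_ofReal this
    simpa using ENNReal.Tendsto.mul_const h1 (Or.inl one_ne_zero)
  calc ∫⁻ x, H x ∂μ = ∫⁻ x, liminf (fun n : ℕ => ENNReal.ofReal (Real.exp (-((1/((n:ℝ)+1)) * w x))) * H x) atTop ∂μ := by
        simp_rw [hlim]
    _ ≤ liminf (fun n : ℕ => ∫⁻ x, ENNReal.ofReal (Real.exp (-((1/((n:ℝ)+1)) * w x))) * H x ∂μ) atTop :=
        lintegral_liminf_le fun n => by fun_prop
    _ ≤ R := by
        refine liminf_le_of_frequently_le' (Frequently.of_forall fun n => h _ (by positivity))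

/-- constant of the free kernel -/
def cS (d : ℕ) (s : ℝ) : ℂ := (4 * (Real.pi : ℂ) * Complex.I * (s : ℂ)) ^ (-(d : ℂ) / 2)

theorem norm_cS (d : ℕ) (s : ℝ) : ‖cS d s‖ = (4 * Real.pi * |s|) ^ (-(d:ℝ)/2) := by
  have : (-(d : ℂ) / 2) = ((-(d:ℝ)/2 : ℝ) : ℂ) := by push_cast; ring
  rw [cS, this, norm_cpow_real]
  congr 1
  simp [abs_of_pos Real.pi_pos]

theorem Sfree_eq (d : ℕ) (x y : Fin d → ℝ) (s : ℝ) :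
    Sfree d x y s = cS d s * Complex.exp (((∑ i, (x i - y i)^2 / (4*s) : ℝ) : ℂ) * I) := by
  rw [Sfree, cS]
  congr 2
  rw [← Finset.sum_div]
  push_cast
  ring

theorem norm_Sfree (d : ℕ) (x y : Fin d → ℝ) (s : ℝ) :
    ‖Sfree d x y s‖ = (4 * Real.pi * |s|) ^ (-(d:ℝ)/2) := by
  rw [Sfree_eq, norm_mul, norm_cS, Complex.norm_exp_ofReal_mul_I, mul_one]

theorem Sfree_meas (d : ℕ) : Measurable (fun p : ((Fin d → ℝ) × (Fin d → ℝ)) × ℝ => Sfree d p.1.1 p.1.2 p.2) := by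
  unfold Sfree
  fun_prop

/-- free propagator -/
def Tf (d : ℕ) (s : ℝ) (f : (Fin d → ℝ) → ℂ) (x : Fin d → ℝ) : ℂ := ∫ y, Sfree d x y s * f y

theorem Sfree_int (d : ℕ) (s : ℝ) (f : (Fin d → ℝ) → ℂ) (hf : Integrable f) (x : Fin d → ℝ) :
    Integrable (fun y => Sfree d x y s * f y) := by
  refine hf.bdd_mul (c := (4 * Real.pi * |s|) ^ (-(d:ℝ)/2)) ?_ ?_
  · exact ((Sfree_meas d).comp (f := fun y => ((x,y),s)) (by fun_prop)).aestronglyMeasurable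
  · exact Eventually.of_forall fun y => (norm_Sfree d x y s).le

theorem Tf_bound (d : ℕ) (s : ℝ) (f : (Fin d → ℝ) → ℂ) (x : Fin d → ℝ) :
    ‖Tf d s f x‖ₑ ≤ ENNReal.ofReal ((4 * Real.pi * |s|) ^ (-(d:ℝ)/2)) * ∫⁻ y, ‖f y‖ₑ := by
  refine (enorm_integral_le_lintegral_enorm _).trans ?_
  rw [← lintegral_const_mul' _ _ ENNReal.ofReal_ne_top]
  refine lintegral_mono fun y => ?_
  rw [enorm_mul, ← ofReal_norm, norm_Sfree]

theorem Tf_meas (d : ℕ) (s : ℝ) (f : (Fin d → ℝ) → ℂ) (hf : Measurable f) : Measurable (Tf d s f) := by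
  have : StronglyMeasurable (fun p : (Fin d → ℝ) × (Fin d → ℝ) => Sfree d p.1 p.2 s * f p.2) := by
    refine Measurable.stronglyMeasurable (Measurable.mul ?_ (by fun_prop))
    exact (Sfree_meas d).comp (f := fun p : (Fin d → ℝ) × (Fin d → ℝ) => ((p.1,p.2),s)) (by fun_prop)
  exact this.integral_prod_right.measurable

theorem Tf_meas2 (d : ℕ) (Φ : (Fin d → ℝ) → ℝ → ℂ) (hΦ : Measurable (fun p : (Fin d → ℝ) × ℝ => Φ p.1 p.2)) :
    Measurable (fun p : ((Fin d → ℝ) × ℝ) × ℝ => Tf d (p.1.2 - p.2) (fun y => Φ y p.2) p.1.1) := by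
  have : StronglyMeasurable (fun p : (((Fin d → ℝ) × ℝ) × ℝ) × (Fin d → ℝ) => Sfree d p.1.1.1 p.2 (p.1.1.2 - p.1.2) * Φ p.2 p.1.2) := by
    refine Measurable.stronglyMeasurable (Measurable.mul ?_ ?_)
    · exact (Sfree_meas d).comp (f := fun p : (((Fin d → ℝ) × ℝ) × ℝ) × (Fin d → ℝ) => ((p.1.1.1,p.2),(p.1.1.2 - p.1.2))) (by fun_prop)
    · exact hΦ.comp (f := fun p : (((Fin d → ℝ) × ℝ) × ℝ) × (Fin d → ℝ) => (p.2, p.1.2)) (by fun_prop)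
  exact this.integral_prod_right.measurable

/-- regularised pairing kernel -/
def Bk (d : ℕ) (δ s s' : ℝ) (y y' : Fin d → ℝ) : ℂ :=
  cS d s * (starRingEnd ℂ) (cS d s') * ((Real.pi : ℂ) / ((δ : ℂ) - ((1/(4*s) - 1/(4*s') : ℝ) : ℂ) * I)) ^ ((d:ℂ)/2) *
  Complex.exp (((∑ i, ((y i)^2 / (4*s) - (y' i)^2/(4*s')) : ℝ) : ℂ) * I -
    ((∑ i, (y i / (2*s) - y' i/(2*s'))^2 : ℝ) : ℂ) / (4 * ((δ : ℂ) - ((1/(4*s) - 1/(4*s') : ℝ) : ℂ) * I)))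

theorem Bk_int (d : ℕ) (δ s s' : ℝ) (hδ : 0 < δ) (y y' : Fin d → ℝ) :
    ∫ x : Fin d → ℝ, (Real.exp (-(δ * ∑ i, x i ^2)) : ℂ) * (Sfree d x y s * (starRingEnd ℂ) (Sfree d x y' s')) =
      Bk d δ s s' y y' := by
  set b : ℂ := (δ : ℂ) - ((1/(4*s) - 1/(4*s') : ℝ) : ℂ) * I with hb
  have hbre : 0 < b.re := by simp [hb, hδ]
  have key := GaussianFourier.integral_cexp_neg_mul_sum_add hbre (fun i : Fin d => -((y i / (2*s) - y' i/(2*s') : ℝ) : ℂ) * I)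
  have e : ∀ x : Fin d → ℝ, (Real.exp (-(δ * ∑ i, x i ^2)) : ℂ) * (Sfree d x y s * (starRingEnd ℂ) (Sfree d x y' s')) =
     (cS d s * (starRingEnd ℂ) (cS d s') * Complex.exp (((∑ i, ((y i)^2 / (4*s) - (y' i)^2/(4*s')) : ℝ) : ℂ) * I)) *
      cexp (-b * ∑ i, (x i : ℂ) ^ 2 + ∑ i, -((y i / (2*s) - y' i/(2*s') : ℝ) : ℂ) * I * x i) := by
    intro x
    rw [Sfree_eq, Sfree_eq, map_mul, ← Complex.exp_conj, Complex.ofReal_exp]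
    simp only [map_mul, conj_ofReal, conj_I]
    have : ∀ A B C D E F G : ℂ, A + B + C = D + E → cexp A * (F * cexp B * (G * cexp C)) = F * G * cexp D * cexp E := by
      intro A B C D E F G h
      calc _ = F * G * (cexp (A + B + C)) := by rw [Complex.exp_add, Complex.exp_add]; ring
        _ = _ := by rw [h, Complex.exp_add]; ring
    apply this
    rw [hb]
    push_cast
    simp only [Finset.mul_sum, Finset.sum_mul, ← Finset.sum_neg_distrib, ← Finset.sum_add_distrib]
    refine Finset.sum_congr rfl fun i _ => ?_
    ring_nf
  simp_rw [e]
  rw [integral_const_mul, key, Bk, ← hb, Fintype.card_fin]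
  have e2 : (∑ i : Fin d, (-((y i / (2*s) - y' i/(2*s') : ℝ) : ℂ) * I)^2) = -((∑ i, (y i / (2*s) - y' i/(2*s'))^2 : ℝ) : ℂ) := by
    push_cast
    rw [← Finset.sum_neg_distrib]
    refine Finset.sum_congr rfl fun i _ => ?_
    rw [mul_pow, I_sq]; ring
  rw [e2, sub_eq_add_neg, Complex.exp_add, neg_div]
  ring

theorem gauss_int (d : ℕ) (δ : ℝ) (hδ : 0 < δ) :
    Integrable (fun x : Fin d → ℝ => (Real.exp (-(δ * ∑ i, x i ^2)) : ℂ)) := by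
  have := GaussianFourier.integrable_cexp_neg_mul_sum_add (b := (δ:ℂ)) (by simpa using hδ) (fun i : Fin d => 0)
  refine this.congr (Eventually.of_forall fun x => ?_)
  simp

theorem Sfree_bdd2 (d : ℕ) (s s' : ℝ) (p : (Fin d → ℝ) × ((Fin d → ℝ) × (Fin d → ℝ))) :
    ‖Sfree d p.1 p.2.1 s * (starRingEnd ℂ) (Sfree d p.1 p.2.2 s')‖ ≤ (4 * Real.pi * |s|) ^ (-(d:ℝ)/2) * (4 * Real.pi * |s'|) ^ (-(d:ℝ)/2) := by
  rw [norm_mul, RCLike.norm_conj, norm_Sfree, norm_Sfree]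

theorem reg_id (d : ℕ) (δ s s' : ℝ) (hδ : 0 < δ) (f g : (Fin d → ℝ) → ℂ) (hf : Integrable f) (hg : Integrable g) :
    ∫ x : Fin d → ℝ, (Real.exp (-(δ * ∑ i, x i ^2)) : ℂ) * (Tf d s f x * (starRingEnd ℂ) (Tf d s' g x)) =
    ∫ p : (Fin d → ℝ) × (Fin d → ℝ), f p.1 * (starRingEnd ℂ) (g p.2) * Bk d δ s s' p.1 p.2 := by
  have hg' : Integrable (fun y => (starRingEnd ℂ) (g y)) := by
    simpa using (Complex.conjLIE.integrable_comp_iff (μ := volume) (φ := g)).2 hg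
  have e1 : ∀ x, (Real.exp (-(δ * ∑ i, x i ^2)) : ℂ) * (Tf d s f x * (starRingEnd ℂ) (Tf d s' g x)) =
      ∫ p : (Fin d → ℝ) × (Fin d → ℝ), (Sfree d x p.1 s * (starRingEnd ℂ) (Sfree d x p.2 s')) *
        ((Real.exp (-(δ * ∑ i, x i ^2)) : ℂ) * (f p.1 * (starRingEnd ℂ) (g p.2))) := by
    intro x
    rw [Tf, Tf, ← integral_conj, ← integral_prod_mul, ← integral_const_mul]
    refine integral_congr_ae (Eventually.of_forall fun p => ?_)
    simp only [map_mul]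
    ring
  simp_rw [e1]
  rw [integral_integral_swap]
  · refine integral_congr_ae (Eventually.of_forall fun p => ?_)
    simp only []
    rw [← Bk_int d δ s s' hδ, ← integral_const_mul]
    refine integral_congr_ae (Eventually.of_forall fun x => ?_)
    simp only []
    ring
  · have h1 := (gauss_int d δ hδ).mul_prod (hf.mul_prod hg')
    refine h1.bdd_mul ?_ (Eventually.of_forall (Sfree_bdd2 d s s'))
    apply Measurable.aestronglyMeasurable
    refine Measurable.mul ?_ (Complex.continuous_conj.measurable.comp ?_)
    · exact (Sfree_meas d).comp (f := fun p : (Fin d → ℝ) × ((Fin d → ℝ) × (Fin d → ℝ)) => ((p.1,p.2.1),s)) (by fun_prop)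
    · exact (Sfree_meas d).comp (f := fun p : (Fin d → ℝ) × ((Fin d → ℝ) × (Fin d → ℝ)) => ((p.1,p.2.2),s')) (by fun_prop)

theorem norm_Bk (d : ℕ) (δ s s' : ℝ) (hδ : 0 ≤ δ) (y y' : Fin d → ℝ) :
    ‖Bk d δ s s' y y'‖ ≤ (4 * Real.pi * |s|) ^ (-(d:ℝ)/2) * (4 * Real.pi * |s'|) ^ (-(d:ℝ)/2) *
      (Real.pi / ‖(δ : ℂ) - ((1/(4*s) - 1/(4*s') : ℝ) : ℂ) * I‖) ^ ((d:ℝ)/2) := by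
  have e : ((d:ℂ)/2) = (((d:ℝ)/2 : ℝ) : ℂ) := by push_cast; ring
  rw [Bk, norm_mul, norm_mul, norm_mul, RCLike.norm_conj, norm_cS, norm_cS, e, norm_cpow_real, norm_div,
    Complex.norm_real, Real.norm_of_nonneg Real.pi_pos.le]
  refine mul_le_of_le_one_right (by positivity) ?_
  rw [Complex.norm_exp, Real.exp_le_one_iff]
  rw [sub_re, Complex.re_ofReal_mul, I_re, mul_zero, zero_sub, neg_nonpos, div_eq_mul_inv, Complex.re_ofReal_mul]
  refine mul_nonneg (Finset.sum_nonneg fun i _ => sq_nonneg _) ?_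
  rw [inv_re]
  refine div_nonneg ?_ (normSq_nonneg _)
  simp [hδ]

/-- gaussian kernel -/
def Gk (d : ℕ) (δ s : ℝ) (w : Fin d → ℝ) : ℝ :=
  (4 * Real.pi * |s|) ^ (-(d:ℝ)) * (Real.pi / δ) ^ ((d:ℝ)/2) * Real.exp (-((1/(16 * s^2 * δ)) * ∑ i, w i ^2))

theorem norm_Bk_diag (d : ℕ) (δ s : ℝ) (hs : s ≠ 0) (hδ : 0 < δ) (y y' : Fin d → ℝ) :
    ‖Bk d δ s s y y'‖ = Gk d δ s (y - y') := by
  have e : ((d:ℂ)/2) = (((d:ℝ)/2 : ℝ) : ℂ) := by push_cast; ring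
  rw [Bk, norm_mul, norm_mul, norm_mul, RCLike.norm_conj, norm_cS, e, norm_cpow_real, norm_div,
    Complex.norm_real, Real.norm_of_nonneg Real.pi_pos.le, Gk, ← Real.rpow_add (by positivity)]
  congr 1
  · simp [abs_of_pos hδ]
  · rw [Complex.norm_exp, sub_re, Complex.re_ofReal_mul, I_re, mul_zero, zero_sub]
    congr 2
    simp only [sub_self, ofReal_zero, zero_mul, sub_zero]
    norm_cast
    rw [Finset.sum_div, Finset.mul_sum]
    refine Finset.sum_congr rfl fun i _ => ?_
    simp only [Pi.sub_apply]
    field_simp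
    ring

theorem Gk_lint (d : ℕ) (δ s : ℝ) (hs : s ≠ 0) (hδ : 0 < δ) : ∫⁻ w, ENNReal.ofReal (Gk d δ s w) = 1 := by
  have hb : 0 < 1/(16 * s^2 * δ) := by positivity
  have key := GaussianFourier.integral_cexp_neg_mul_sum_add (b := ((1/(16 * s^2 * δ) : ℝ) : ℂ)) (by rw [ofReal_re]; exact hb) (fun i : Fin d => 0)
  have h1 : Integrable (fun x : Fin d → ℝ => Real.exp (-((1/(16 * s^2 * δ)) * ∑ i, x i ^2))) := by
    have := (gauss_int d _ hb).re
    simpa only [RCLike.re_to_complex, Complex.ofReal_re] using this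
  have h2 : ∫ x : Fin d → ℝ, Real.exp (-((1/(16 * s^2 * δ)) * ∑ i, x i ^2)) = (Real.pi * (16 * s^2 * δ)) ^ ((d:ℝ)/2) := by
    apply Complex.ofReal_injective
    rw [← integral_complex_ofReal, Complex.ofReal_cpow (by positivity)]
    convert key using 1
    · refine integral_congr_ae (Eventually.of_forall fun x => ?_)
      simp
    · simp
      congr 1
      have : (s:ℂ) ≠ 0 := by exact_mod_cast hs
      have : (δ:ℂ) ≠ 0 := by exact_mod_cast hδ.ne'
      field_simp
  have h3 : ∫ w, Gk d δ s w = 1 := by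
    simp only [Gk]
    rw [integral_const_mul, h2, mul_assoc, ← Real.mul_rpow (by positivity) (by positivity)]
    have : Real.pi / δ * (Real.pi * (16 * s^2 * δ)) = (4 * Real.pi * |s|)^(2:ℝ) := by
      rw [Real.rpow_two, mul_pow, sq_abs]; field_simp; ring
    rw [this, ← Real.rpow_mul (by positivity), ← Real.rpow_add (by positivity)]
    ring_nf
    simp
  rw [← ofReal_integral_eq_lintegral_ofReal, h3, ENNReal.ofReal_one]
  · exact h1.const_mul _
  · exact Eventually.of_forall fun w => by simp only [Gk]; positivity

theorem Tf_L2 (d : ℕ) (s : ℝ) (hs : s ≠ 0) (f : (Fin d → ℝ) → ℂ) (hfm : Measurable f) (hf : Integrable f) :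
    ∫⁻ x, ‖Tf d s f x‖ₑ ^ (2:ℝ) ≤ ∫⁻ y, ‖f y‖ₑ ^ (2:ℝ) := by
  have hTm := Tf_meas d s f hfm
  refine fatou_w volume (fun x => ∑ i, x i ^2) (by fun_prop) _ (by fun_prop) _ fun δ hδ => ?_
  have hGm : Measurable (Gk d δ s) := by unfold Gk; fun_prop
  have e1 : ∫⁻ x, ENNReal.ofReal (Real.exp (-(δ * ∑ i, x i ^2))) * ‖Tf d s f x‖ₑ ^ (2:ℝ) =
      ‖∫ x : Fin d → ℝ, (Real.exp (-(δ * ∑ i, x i ^2)) : ℂ) * (Tf d s f x * (starRingEnd ℂ) (Tf d s f x))‖ₑ := by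
    have e2 : ∀ x : Fin d → ℝ, (Real.exp (-(δ * ∑ i, x i ^2)) : ℂ) * (Tf d s f x * (starRingEnd ℂ) (Tf d s f x)) =
      ((Real.exp (-(δ * ∑ i, x i ^2)) * ‖Tf d s f x‖^2 : ℝ) : ℂ) := by
      intro x; rw [mul_conj, normSq_eq_norm_sq]; push_cast; ring
    simp_rw [e2]
    rw [integral_complex_ofReal, ← ofReal_norm, Complex.norm_real, ofReal_norm, ← ofReal_norm,
      Real.norm_of_nonneg (integral_nonneg fun x => by positivity), ofReal_integral_eq_lintegral_ofReal]
    · refine lintegral_congr fun x => ?_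
      rw [ENNReal.ofReal_mul (by positivity), ← ofReal_norm, ENNReal.ofReal_rpow_of_nonneg (norm_nonneg _) (by norm_num), Real.rpow_two]
    · have h1 : Integrable (fun x : Fin d → ℝ => Real.exp (-(δ * ∑ i, x i ^2))) := by
        have := (gauss_int d _ hδ).re
        simpa only [RCLike.re_to_complex, Complex.ofReal_re] using this
      refine h1.mul_bdd (c := (((4 * Real.pi * |s|) ^ (-(d:ℝ)/2)) * ∫ y, ‖f y‖)^2) (by fun_prop) (Eventually.of_forall fun x => ?_)
      rw [norm_pow, norm_norm]
      gcongr
      refine (norm_integral_le_integral_norm _).trans ?_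
      rw [← integral_const_mul]
      simp_rw [norm_mul, norm_Sfree]
      exact le_rfl
    · exact Eventually.of_forall fun x => by positivity
  rw [e1, reg_id d δ s s hδ f f hf hf]
  refine (enorm_integral_le_lintegral_enorm _).trans ?_
  calc _ ≤ ∫⁻ p : (Fin d → ℝ) × (Fin d → ℝ), ((2:ℝ≥0∞)⁻¹ * (‖f p.1‖ₑ ^ (2:ℝ) * ENNReal.ofReal (Gk d δ s (p.1 - p.2)))
          + (2:ℝ≥0∞)⁻¹ * (‖f p.2‖ₑ ^ (2:ℝ) * ENNReal.ofReal (Gk d δ s (p.1 - p.2)))) := by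
        refine lintegral_mono fun p => ?_
        simp only []
        rw [enorm_mul, enorm_mul, RCLike.enorm_conj, ← ofReal_norm (Bk _ _ _ _ _ _), norm_Bk_diag d δ s hs hδ, ← mul_assoc, ← mul_assoc, ← add_mul, ← mul_add]
        refine mul_le_mul' ?_ le_rfl
        rw [← ofReal_norm, ← ofReal_norm, ENNReal.ofReal_rpow_of_nonneg (norm_nonneg _) (by norm_num), ENNReal.ofReal_rpow_of_nonneg (norm_nonneg _) (by norm_num),
          ← ENNReal.ofReal_add (by positivity) (by positivity), ← ENNReal.ofReal_mul (by positivity),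
          show (2:ℝ≥0∞)⁻¹ = ENNReal.ofReal (2⁻¹) by rw [ENNReal.ofReal_inv_of_pos (by norm_num)]; simp, ← ENNReal.ofReal_mul (by positivity)]
        apply ENNReal.ofReal_le_ofReal
        rw [Real.rpow_two, Real.rpow_two]
        nlinarith [sq_nonneg (‖f p.1‖ - ‖f p.2‖)]
    _ = (2:ℝ≥0∞)⁻¹ * (∫⁻ y, ‖f y‖ₑ ^ (2:ℝ)) + (2:ℝ≥0∞)⁻¹ * (∫⁻ y, ‖f y‖ₑ ^ (2:ℝ)) := by
        rw [lintegral_add_left (by fun_prop), lintegral_const_mul _ (by fun_prop), lintegral_const_mul _ (by fun_prop)]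
        congr 2
        · rw [Measure.volume_eq_prod, lintegral_prod _ (by fun_prop)]
          refine lintegral_congr fun x => ?_
          simp only []
          rw [lintegral_const_mul _ (by fun_prop), lintegral_sub_left_eq_self (fun w => ENNReal.ofReal (Gk d δ s w)), Gk_lint d δ s hs hδ, mul_one]
        · rw [Measure.volume_eq_prod, lintegral_prod_symm _ (by fun_prop)]
          refine lintegral_congr fun x => ?_
          simp only []
          rw [lintegral_const_mul _ (by fun_prop), lintegral_sub_right_eq_self (fun w => ENNReal.ofReal (Gk d δ s w)), Gk_lint d δ s hs hδ, mul_one]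
    _ = _ := by
        rw [← add_mul, ENNReal.inv_two_add_inv_two, one_mul]

theorem dispersive (d : ℕ) (r : ℝ) (hr : 2 ≤ r) : ∃ C > (0:ℝ), ∀ s : ℝ, s ≠ 0 → ∀ f : (Fin d → ℝ) → ℂ, Measurable f → Integrable f →
    (∫⁻ x, ‖Tf d s f x‖ₑ ^ r) ^ (1/r) ≤ ENNReal.ofReal (C * |s| ^ (-((d:ℝ)*(1/2 - 1/r)))) * (∫⁻ y, ‖f y‖ₑ ^ (r/(r-1))) ^ (1/(r/(r-1))) := by
  rcases hr.eq_or_lt with rfl | hr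
  · refine ⟨1, one_pos, fun s hs f hfm hf => ?_⟩
    norm_num
    have := ENNReal.rpow_le_rpow (Tf_L2 d s hs f hfm hf) (by norm_num : (0:ℝ) ≤ 1/2)
    simpa using this
  · have hr2 : 0 < r - 2 := by linarith
    refine ⟨(4 * r / (r-2))^(1/r) * (2 * (4*Real.pi)^(-(d:ℝ)/2))^((r-2)/r), by positivity, fun s hs f hfm hf => ?_⟩
    have hs' : 0 < |s| := abs_pos.2 hs
    have := interp volume volume (Tf d s) ((4 * Real.pi * |s|) ^ (-(d:ℝ)/2)) (by positivity) r hr (fun f hf _ => Tf_meas d s f hf)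
      (fun f g hf hg x => by
        rw [Tf, Tf, Tf, ← integral_add (Sfree_int d s f hf x) (Sfree_int d s g hg x)]; simp_rw [mul_add])
      (fun c f x => by rw [Tf, Tf, ← integral_const_mul]; congr 1; ext y; ring)
      (fun f _ x => Tf_bound d s f x) (fun f hfm hf => Tf_L2 d s hs f hfm hf) f hfm hf
    refine this.trans (le_of_eq ?_)
    congr 2
    rw [Real.mul_rpow (by positivity) (by positivity), ← Real.rpow_mul (by positivity), mul_assoc ((4 * r / (r-2))^(1/r))]
    congr 1
    rw [Real.mul_rpow (x := 4 * Real.pi) (by positivity) (by positivity), ← mul_assoc, mul_one_div, Real.mul_rpow (by positivity) (by positivity)]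
    congr 1
    rw [← Real.rpow_mul (by positivity)]
    congr 1
    field_simp

theorem lint_cs {α : Type*} [MeasurableSpace α] (μ : Measure α) (u v : α → ℂ) (hu : Measurable u) (hv : Measurable v) (M : ℝ≥0∞)
    (hM : ∫⁻ x, ‖u x‖ₑ ^ (2:ℝ) ∂μ ≤ M) (hM' : ∫⁻ x, ‖v x‖ₑ ^ (2:ℝ) ∂μ ≤ M) : ∫⁻ x, ‖u x‖ₑ * ‖v x‖ₑ ∂μ ≤ M := by
  have h22 : Real.HolderConjugate 2 2 := by rw [Real.holderConjugate_iff]; norm_num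
  refine (ENNReal.lintegral_mul_le_Lp_mul_Lq μ h22 (f := fun x => ‖u x‖ₑ) (g := fun x => ‖v x‖ₑ) (by fun_prop) (by fun_prop)).trans ?_
  calc _ ≤ M ^ (1/(2:ℝ)) * M ^ (1/(2:ℝ)) := by gcongr
    _ = M := by rw [← ENNReal.rpow_add_of_nonneg _ _ (by norm_num) (by norm_num)]; norm_num

theorem Bk_zero_norm (d : ℕ) (s s' : ℝ) (hs : s ≠ 0) (hs' : s' ≠ 0) (hss : s ≠ s') :
    ‖cS d s * (starRingEnd ℂ) (cS d s') * ((Real.pi : ℂ) / (((0:ℝ) : ℂ) - ((1/(4*s) - 1/(4*s') : ℝ) : ℂ) * I)) ^ ((d:ℂ)/2)‖ = ‖cS d (s - s')‖ := by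
  have e : ((d:ℂ)/2) = (((d:ℝ)/2 : ℝ) : ℂ) := by push_cast; ring
  rw [norm_mul, norm_mul, RCLike.norm_conj, norm_cS, norm_cS, norm_cS, e, norm_cpow_real, norm_div,
    Complex.norm_real, Real.norm_of_nonneg Real.pi_pos.le, ofReal_zero, zero_sub, norm_neg, norm_mul, norm_I, mul_one, Complex.norm_real, Real.norm_eq_abs]
  have h1 : 0 < |s| := abs_pos.2 hs
  have h2 : 0 < |s'| := abs_pos.2 hs'
  have h3 : 0 < |s - s'| := abs_pos.2 (sub_ne_zero.2 hss)
  have hb : |1/(4*s) - 1/(4*s')| = |s - s'| / (4 * |s| * |s'|) := by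
    rw [show 1/(4*s) - 1/(4*s') = -((s - s')/(4 * s * s')) by field_simp; ring, abs_neg, abs_div, abs_mul, abs_mul]
    norm_num
  rw [hb]
  have key : ∀ X : ℝ, 0 < X → X ^ (-(d:ℝ)/2) = (X⁻¹) ^ ((d:ℝ)/2) := fun X hX => by
    rw [Real.inv_rpow hX.le, ← Real.rpow_neg hX.le]; congr 1; ring
  rw [key _ (by positivity), key _ (by positivity), key _ (by positivity), ← Real.mul_rpow (by positivity) (by positivity),
    ← Real.mul_rpow (by positivity) (by positivity)]
  congr 1
  field_simp

theorem Bk_zero (d : ℕ) (s s' : ℝ) (hs : s ≠ 0) (hs' : s' ≠ 0) (hss : s ≠ s') : ∃ K : ℂ, ‖K‖ = 1 ∧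
    ∀ y y', Bk d 0 s s' y y' = K * Sfree d y' y (s - s') := by
  have hc : cS d (s-s') ≠ 0 := by
    rw [← norm_pos_iff, norm_cS]
    have h3 : 0 < |s - s'| := abs_pos.2 (sub_ne_zero.2 hss)
    positivity
  have hn := Bk_zero_norm d s s' hs hs' hss
  set M0 := cS d s * (starRingEnd ℂ) (cS d s') * ((Real.pi : ℂ) / (((0:ℝ) : ℂ) - ((1/(4*s) - 1/(4*s') : ℝ) : ℂ) * I)) ^ ((d:ℂ)/2) with hM0
  refine ⟨M0 / cS d (s-s'), by rw [norm_div, hn, div_self (norm_ne_zero_iff.2 hc)], fun y y' => ?_⟩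
  rw [Sfree_eq, ← mul_assoc, div_mul_cancel₀ _ hc, Bk, ← hM0]
  congr 2
  have hsc : (s:ℂ) ≠ 0 := by exact_mod_cast hs
  have hsc' : (s':ℂ) ≠ 0 := by exact_mod_cast hs'
  have hssc : (s:ℂ) - s' ≠ 0 := sub_ne_zero.2 (by exact_mod_cast hss)
  have hbc : ((1/(4*s) - 1/(4*s') : ℝ) : ℂ) = -((s - s')/(4 * s * s')) := by push_cast; field_simp; ring
  have hdv : ∀ A : ℂ, A / (4 * (((0:ℝ):ℂ) - -((s - s')/(4 * s * s')) * I)) = - (A * ((s * s')/(s - s'))) * I := by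
    intro A
    have : A / (4 * (((0:ℝ):ℂ) - -((s - s')/(4 * s * s')) * I)) = (A * ((s * s')/(s - s'))) / I := by
      simp only [ofReal_zero]
      field_simp
      ring
    rw [this, Complex.div_I]; ring
  rw [hbc, hdv]
  push_cast
  rw [neg_mul, sub_neg_eq_add, ← add_mul]
  congr 1
  rw [Finset.sum_mul, ← Finset.sum_add_distrib]
  refine Finset.sum_congr rfl fun i _ => ?_
  field_simp
  ring

theorem Bk_tendsto (d : ℕ) (s s' : ℝ) (hs : s ≠ 0) (hs' : s' ≠ 0) (hss : s ≠ s') (y y' : Fin d → ℝ) :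
    ContinuousAt (fun δ : ℝ => Bk d δ s s' y y') 0 := by
  have hβ : (1/(4*s) - 1/(4*s') : ℝ) ≠ 0 := by
    rw [show 1/(4*s) - 1/(4*s') = -((s - s')/(4 * s * s')) by field_simp; ring]
    have := sub_ne_zero.2 hss
    simp [hs, hs', this]
  unfold Bk
  set β := (1/(4*s) - 1/(4*s') : ℝ)
  have hb : ((0:ℝ):ℂ) - (β:ℂ) * I ≠ 0 := by simp [hβ]
  have hc : ContinuousAt (fun δ : ℝ => (δ:ℂ) - (β:ℂ) * I) 0 := by fun_prop
  refine ContinuousAt.mul (ContinuousAt.mul continuousAt_const ?_) ?_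
  · refine ContinuousAt.cpow (continuousAt_const.div hc hb) continuousAt_const ?_
    right
    simp only [ofReal_zero, zero_sub, div_im, neg_im, neg_re, mul_re, mul_im, I_re, I_im, ofReal_re, ofReal_im, normSq_neg, normSq_mul, normSq_I, normSq_ofReal]
    have := Real.pi_pos.ne'
    simp [hβ]
  · refine ContinuousAt.cexp (continuousAt_const.sub (continuousAt_const.div (continuousAt_const.mul hc) ?_))
    exact mul_ne_zero (by norm_num) hb

theorem pair_id (d : ℕ) (s s' : ℝ) (hs : s ≠ 0) (hs' : s' ≠ 0) (hss : s ≠ s') (f g : (Fin d → ℝ) → ℂ)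
    (hfm : Measurable f) (hgm : Measurable g) (hf : Integrable f) (hg : Integrable g)
    (hf2 : ∫⁻ y, ‖f y‖ₑ ^ (2:ℝ) < ⊤) (hg2 : ∫⁻ y, ‖g y‖ₑ ^ (2:ℝ) < ⊤) :
    ∃ K : ℂ, ‖K‖ = 1 ∧ ∫ x : Fin d → ℝ, Tf d s f x * (starRingEnd ℂ) (Tf d s' g x) =
      K * ∫ y', (starRingEnd ℂ) (g y') * Tf d (s - s') f y' := by
  obtain ⟨K, hK, hB⟩ := Bk_zero d s s' hs hs' hss
  refine ⟨K, hK, ?_⟩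
  have hTf := Tf_meas d s f hfm
  have hTg := Tf_meas d s' g hgm
  have hg' : Integrable (fun y => (starRingEnd ℂ) (g y)) := by
    simpa using (Complex.conjLIE.integrable_comp_iff (μ := volume) (φ := g)).2 hg
  have hfg := hf.mul_prod hg'
  have hBm : ∀ δ, Measurable (fun p : (Fin d → ℝ) × (Fin d → ℝ) => Bk d δ s s' p.1 p.2) := fun δ => by unfold Bk; fun_prop
  have hβ : 0 < |(1/(4*s) - 1/(4*s') : ℝ)| := by
    rw [show 1/(4*s) - 1/(4*s') = -((s - s')/(4 * s * s')) by field_simp; ring]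
    have := sub_ne_zero.2 hss
    simp [hs, hs', this]
  have hδ0 : Tendsto (fun n : ℕ => 1/((n:ℝ)+1)) atTop (𝓝 0) := tendsto_one_div_add_atTop_nhds_zero_nat
  have t1 : Tendsto (fun n : ℕ => ∫ x : Fin d → ℝ, (Real.exp (-((1/((n:ℝ)+1)) * ∑ i, x i ^2)) : ℂ) * (Tf d s f x * (starRingEnd ℂ) (Tf d s' g x)))
      atTop (𝓝 (∫ x : Fin d → ℝ, Tf d s f x * (starRingEnd ℂ) (Tf d s' g x))) := by
    refine tendsto_integral_of_dominated_convergence (fun x => ‖Tf d s f x‖ * ‖Tf d s' g x‖) ?_ ?_ ?_ ?_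
    · intro n
      refine Measurable.aestronglyMeasurable ?_
      exact Measurable.mul (by fun_prop) (hTf.mul (Complex.continuous_conj.measurable.comp hTg))
    · refine ⟨by fun_prop, ?_⟩
      have := lint_cs volume _ _ hTf hTg _ ((Tf_L2 d s hs f hfm hf).trans (le_max_left _ (∫⁻ y, ‖g y‖ₑ ^ (2:ℝ))))
        ((Tf_L2 d s' hs' g hgm hg).trans (le_max_right _ _))
      refine lt_of_le_of_lt ?_ (lt_of_le_of_lt this (max_lt hf2 hg2))
      simp [enorm_mul]
    · intro n
      refine Eventually.of_forall fun x => ?_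
      rw [norm_mul, norm_mul, RCLike.norm_conj, Complex.norm_real, Real.norm_of_nonneg (by positivity)]
      refine mul_le_of_le_one_left (by positivity) ?_
      rw [Real.exp_le_one_iff, neg_nonpos]
      positivity
    · refine Eventually.of_forall fun x => ?_
      have : Tendsto (fun n : ℕ => Real.exp (-((1/((n:ℝ)+1)) * ∑ i, x i ^2))) atTop (𝓝 (Real.exp (-(0 * ∑ i, x i ^2)))) :=
        (Real.continuous_exp.tendsto _).comp ((hδ0.mul_const _).neg)
      have h2 := ((Complex.continuous_ofReal.tendsto _).comp this).mul_const (Tf d s f x * (starRingEnd ℂ) (Tf d s' g x))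
      simpa using h2
  have t2 : Tendsto (fun n : ℕ => ∫ p : (Fin d → ℝ) × (Fin d → ℝ), f p.1 * (starRingEnd ℂ) (g p.2) * Bk d (1/((n:ℝ)+1)) s s' p.1 p.2)
      atTop (𝓝 (∫ p : (Fin d → ℝ) × (Fin d → ℝ), f p.1 * (starRingEnd ℂ) (g p.2) * Bk d 0 s s' p.1 p.2)) := by
    refine tendsto_integral_of_dominated_convergence (fun p => ‖f p.1 * (starRingEnd ℂ) (g p.2)‖ *
      ((4 * Real.pi * |s|) ^ (-(d:ℝ)/2) * (4 * Real.pi * |s'|) ^ (-(d:ℝ)/2) * (Real.pi / |(1/(4*s) - 1/(4*s') : ℝ)|) ^ ((d:ℝ)/2))) ?_ ?_ ?_ ?_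
    · intro n
      refine Measurable.aestronglyMeasurable ?_
      exact Measurable.mul (Measurable.mul (by fun_prop) (Complex.continuous_conj.measurable.comp (by fun_prop))) (hBm _)
    · exact hfg.norm.mul_const _
    · intro n
      refine Eventually.of_forall fun p => ?_
      rw [norm_mul]
      refine mul_le_mul_of_nonneg_left ((norm_Bk d _ s s' (by positivity) _ _).trans ?_) (norm_nonneg _)
      gcongr
      refine le_trans (le_of_eq ?_) (Complex.abs_im_le_norm _)
      rw [sub_im, ofReal_im, Complex.im_ofReal_mul, I_im, mul_one, zero_sub, abs_neg]
    · refine Eventually.of_forall fun p => ?_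
      exact ((Bk_tendsto d s s' hs hs' hss p.1 p.2).tendsto.comp hδ0).const_mul _
  have e : ∀ n : ℕ, _ := fun n => reg_id d (1/((n:ℝ)+1)) s s' (by positivity) f g hf hg
  simp_rw [e] at t1
  rw [tendsto_nhds_unique t1 t2]
  simp_rw [hB]
  rw [Measure.volume_eq_prod, integral_prod_symm, ← integral_const_mul]
  · refine integral_congr_ae (Eventually.of_forall fun y' => ?_)
    simp only []
    rw [Tf, ← integral_const_mul, ← integral_const_mul]
    refine integral_congr_ae (Eventually.of_forall fun y => ?_)
    simp only []
    ring
  · refine hfg.mul_bdd (c := ‖K‖ * (4 * Real.pi * |s-s'|) ^ (-(d:ℝ)/2)) ?_ (Eventually.of_forall fun p => ?_)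
    · simp_rw [← hB]; exact (hBm 0).aestronglyMeasurable
    · rw [norm_mul, norm_Sfree]

theorem pairing (d : ℕ) (r : ℝ) (hr : 2 ≤ r) (C : ℝ) (hC : ∀ s : ℝ, s ≠ 0 → ∀ f : (Fin d → ℝ) → ℂ, Measurable f → Integrable f →
    (∫⁻ x, ‖Tf d s f x‖ₑ ^ r) ^ (1/r) ≤ ENNReal.ofReal (C * |s| ^ (-((d:ℝ)*(1/2 - 1/r)))) * (∫⁻ y, ‖f y‖ₑ ^ (r/(r-1))) ^ (1/(r/(r-1))))
    (s s' : ℝ) (hs : s ≠ 0) (hs' : s' ≠ 0) (hss : s ≠ s') (f g : (Fin d → ℝ) → ℂ)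
    (hfm : Measurable f) (hgm : Measurable g) (hf : Integrable f) (hg : Integrable g)
    (hf2 : ∫⁻ y, ‖f y‖ₑ ^ (2:ℝ) < ⊤) (hg2 : ∫⁻ y, ‖g y‖ₑ ^ (2:ℝ) < ⊤) :
    ‖∫ x : Fin d → ℝ, Tf d s f x * (starRingEnd ℂ) (Tf d s' g x)‖ₑ ≤
      ENNReal.ofReal (C * |s-s'| ^ (-((d:ℝ)*(1/2 - 1/r)))) * (∫⁻ y, ‖f y‖ₑ ^ (r/(r-1))) ^ (1/(r/(r-1))) *
        (∫⁻ y, ‖g y‖ₑ ^ (r/(r-1))) ^ (1/(r/(r-1))) := by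
  obtain ⟨K, hK, e⟩ := pair_id d s s' hs hs' hss f g hfm hgm hf hg hf2 hg2
  have hTf := Tf_meas d (s-s') f hfm
  have hh : Real.HolderConjugate r (r/(r-1)) := Real.HolderConjugate.conjExponent (by linarith)
  rw [e, enorm_mul, ← ofReal_norm K, hK, ENNReal.ofReal_one, one_mul]
  refine (enorm_integral_le_lintegral_enorm _).trans ?_
  simp_rw [enorm_mul, RCLike.enorm_conj, mul_comm (‖g _‖ₑ)]
  refine (ENNReal.lintegral_mul_le_Lp_mul_Lq volume hh (f := fun x => ‖Tf d (s-s') f x‖ₑ) (g := fun x => ‖g x‖ₑ) (by fun_prop) (by fun_prop)).trans ?_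
  exact mul_le_mul' (hC _ (sub_ne_zero.2 hss) f hfm hf) le_rfl

theorem zker_norm (a ε β z : ℝ) (hz : 0 < z) : ‖((z ^ a : ℝ) : ℂ) * cexp (-((ε:ℂ) - β * I) * (z:ℂ)^2)‖ = z ^ a * Real.exp (-ε * z^2) := by
  rw [norm_mul, Complex.norm_real, Real.norm_of_nonneg (by positivity), Complex.norm_exp]
  congr 2
  norm_cast
  rw [mul_comm, Complex.re_ofReal_mul]
  simp; ring

theorem zker_int (a ε β : ℝ) (ha : -1 < a) (hε : 0 < ε) :
    IntegrableOn (fun z : ℝ => ((z ^ a : ℝ) : ℂ) * cexp (-((ε:ℂ) - β * I) * (z:ℂ)^2)) (Set.Ioi 0) := by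
  have h := integrableOn_rpow_mul_exp_neg_mul_sq hε ha
  refine Integrable.mono' h (by fun_prop) ?_
  filter_upwards [ae_restrict_mem measurableSet_Ioi] with z hz
  exact (zker_norm a ε β z hz).le

theorem zker_bound (a : ℝ) (ha : -1 < a) (ha1 : a < 1) (ε β : ℝ) (hε : 0 < ε) (hβ : β ≠ 0) :
    ‖∫ z in Set.Ioi (0:ℝ), ((z ^ a : ℝ) : ℂ) * cexp (-((ε:ℂ) - β * I) * (z:ℂ)^2)‖ ≤ (1/(a+1) + 1) * |β| ^ (-((a+1)/2)) := by
  set b : ℂ := (ε:ℂ) - β * I with hb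
  have hβp : 0 < |β| := abs_pos.2 hβ
  have hbn : |β| ≤ ‖b‖ := by
    refine le_trans (le_of_eq ?_) (Complex.abs_im_le_norm _)
    simp [hb]
  have hb0 : b ≠ 0 := norm_pos_iff.1 (lt_of_lt_of_le hβp hbn)
  set R : ℝ := |β| ^ (-(1/2) : ℝ) with hR
  have hRp : 0 < R := by positivity
  have hint := zker_int a ε β ha hε
  rw [← hb] at hint
  have hcup : Set.Ioi (0:ℝ) = Set.Ioc 0 R ∪ Set.Ioi R := (Set.Ioc_union_Ioi_eq_Ioi hRp.le).symm
  have hintR : IntegrableOn (fun z : ℝ => ((z ^ a : ℝ) : ℂ) * cexp (-b * (z:ℂ)^2)) (Set.Ioi R) := hint.mono_set (Set.Ioi_subset_Ioi hRp.le)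
  have hint0 : IntegrableOn (fun z : ℝ => ((z ^ a : ℝ) : ℂ) * cexp (-b * (z:ℂ)^2)) (Set.Ioc 0 R) := hint.mono_set Set.Ioc_subset_Ioi_self
  have nexp : ∀ z : ℝ, ‖cexp (-b * (z:ℂ)^2)‖ ≤ 1 := fun z => by
    rw [Complex.norm_exp, Real.exp_le_one_iff]
    norm_cast
    rw [mul_comm, Complex.re_ofReal_mul]
    have : (-b).re = -ε := by simp [hb]
    rw [this]
    nlinarith [sq_nonneg z]
  have near : ‖∫ z in Set.Ioc 0 R, ((z ^ a : ℝ) : ℂ) * cexp (-b * (z:ℂ)^2)‖ ≤ 1/(a+1) * |β| ^ (-((a+1)/2)) := by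
    have h1 : ∫ z in Set.Ioc 0 R, z ^ a = R^(a+1)/(a+1) := by
      rw [← intervalIntegral.integral_of_le hRp.le, integral_rpow (Or.inl ha), Real.zero_rpow (by linarith), sub_zero]
    have h2 : IntegrableOn (fun z : ℝ => z ^ a) (Set.Ioc 0 R) := by
      rw [← intervalIntegrable_iff_integrableOn_Ioc_of_le hRp.le]
      exact intervalIntegral.intervalIntegrable_rpow' ha
    refine (norm_integral_le_of_norm_le h2 ?_).trans (le_of_eq ?_)
    · filter_upwards [ae_restrict_mem measurableSet_Ioc] with z hz
      have := hz.1
      rw [norm_mul, Complex.norm_real, Real.norm_of_nonneg (by positivity)]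
      exact mul_le_of_le_one_right (by positivity) (nexp z)
    · rw [h1, hR, ← Real.rpow_mul hβp.le, div_eq_inv_mul, one_div (a+1)]
      congr 2
      ring
  have far : ‖∫ z in Set.Ioi R, ((z ^ a : ℝ) : ℂ) * cexp (-b * (z:ℂ)^2)‖ ≤ 1 * |β| ^ (-((a+1)/2)) := by
    set h : ℝ → ℂ := fun z => -(((z ^ (a-1) : ℝ) : ℂ) * cexp (-b * (z:ℂ)^2)) / (2*b) with hh
    set k : ℝ → ℂ := fun z => (((a-1) * z ^ (a-2) : ℝ) : ℂ) * cexp (-b * (z:ℂ)^2) / (2*b) with hk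
    have hder : ∀ z ∈ Set.Ioi R, HasDerivAt h (((z ^ a : ℝ) : ℂ) * cexp (-b * (z:ℂ)^2) - k z) z := by
      intro z hz
      have hz0 : 0 < z := hRp.trans hz
      have d1 : HasDerivAt (fun z : ℝ => ((z ^ (a-1) : ℝ) : ℂ)) (((a-1) * z ^ (a-1-1) : ℝ) : ℂ) z :=
        (Real.hasDerivAt_rpow_const (Or.inl hz0.ne')).ofReal_comp
      have d2 : HasDerivAt (fun z : ℝ => -b * (z:ℂ)^2) (-b * (2 * z)) z := by
        have := ((hasDerivAt_id (z:ℂ)).pow 2).comp_ofReal.const_mul (-b)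
        simpa using this
      have d3 := ((d1.mul d2.cexp).neg).div_const (2*b)
      refine d3.congr_deriv ?_
      have e1 : z ^ a = z ^ (a-1) * z := by rw [← Real.rpow_add_one hz0.ne']; congr 1; ring
      rw [hk, e1, show a - 1 - 1 = a - 2 by ring]
      push_cast
      field_simp
      ring
    have hpow : IntegrableOn (fun z : ℝ => z ^ (a-2)) (Set.Ioi R) := integrableOn_Ioi_rpow_of_lt (by linarith) hRp
    have kn : ∀ z ∈ Set.Ioi R, ‖k z‖ ≤ (1-a)/(2*‖b‖) * z ^ (a-2) := by
      intro z hz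
      have hz0 : 0 < z := hRp.trans hz
      rw [hk]
      simp only []
      rw [norm_div, norm_mul, norm_mul, Complex.norm_real, norm_mul, Real.norm_of_nonpos (by linarith), Real.norm_of_nonneg (by positivity)]
      simp only [norm_ofNat, neg_sub]
      rw [div_mul_eq_mul_div]
      refine div_le_div_of_nonneg_right ?_ (by positivity)
      exact mul_le_of_le_one_right (mul_nonneg (by linarith) (by positivity)) (nexp z)
    have kint : IntegrableOn k (Set.Ioi R) := by
      refine Integrable.mono' (hpow.const_mul ((1-a)/(2*‖b‖))) (by rw [hk]; fun_prop) ?_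
      filter_upwards [ae_restrict_mem measurableSet_Ioi] with z hz
      exact kn z hz
    have hn : ∀ z, 0 < z → ‖h z‖ ≤ z ^ (a-1) / (2 * ‖b‖) := by
      intro z hz0
      rw [hh]
      simp only []
      rw [norm_div, norm_neg, norm_mul, norm_mul, Complex.norm_real, Real.norm_of_nonneg (by positivity)]
      simp only [norm_ofNat]
      gcongr
      exact mul_le_of_le_one_right (by positivity) (nexp z)
    have hlim : Tendsto h atTop (𝓝 0) := by
      refine squeeze_zero_norm' (a := fun z => z ^ (a-1) / (2 * ‖b‖)) ?_ ?_
      · filter_upwards [eventually_gt_atTop 0] with z hz using hn z hz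
      · have := (tendsto_rpow_neg_atTop (by linarith : 0 < 1 - a)).div_const (2*‖b‖)
        simpa using this
    have hcont : ContinuousWithinAt h (Set.Ici R) R := by
      apply ContinuousAt.continuousWithinAt
      rw [hh]
      have : ContinuousAt (fun z : ℝ => z ^ (a-1)) R := Real.continuousAt_rpow_const _ _ (Or.inl hRp.ne')
      have h2 : ContinuousAt (fun z : ℝ => ((z ^ (a-1) : ℝ) : ℂ)) R := Complex.continuous_ofReal.continuousAt.comp this
      exact ((h2.mul (by fun_prop)).neg).div_const _
    have key := integral_Ioi_of_hasDerivAt_of_tendsto hcont hder (hintR.sub kint) hlim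
    rw [integral_sub hintR kint, sub_eq_iff_eq_add] at key
    rw [key, zero_sub]
    have kb : ‖∫ z in Set.Ioi R, k z‖ ≤ R ^ (a-1) / (2 * ‖b‖) := by
      refine (norm_integral_le_of_norm_le (hpow.const_mul ((1-a)/(2*‖b‖))) ?_).trans (le_of_eq ?_)
      · filter_upwards [ae_restrict_mem measurableSet_Ioi] with z hz
        exact kn z hz
      · rw [integral_const_mul, integral_Ioi_rpow_of_lt (by linarith) hRp, show a - 2 + 1 = a - 1 by ring]
        have : a - 1 ≠ 0 := by linarith
        have : ‖b‖ ≠ 0 := norm_ne_zero_iff.2 hb0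
        field_simp
        ring
    calc _ ≤ ‖h R‖ + ‖∫ z in Set.Ioi R, k z‖ := (norm_add_le _ _).trans (by rw [norm_neg])
      _ ≤ R ^ (a-1) / (2 * ‖b‖) + R ^ (a-1) / (2 * ‖b‖) := add_le_add (hn R hRp) kb
      _ = R ^ (a-1) / ‖b‖ := by
          have : ‖b‖ ≠ 0 := norm_ne_zero_iff.2 hb0
          field_simp; ring
      _ ≤ R ^ (a-1) / |β| := by gcongr
      _ = _ := by
          rw [hR, ← Real.rpow_mul hβp.le, one_mul, ← Real.rpow_sub_one hβp.ne']
          congr 1; ring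
  rw [hcup, setIntegral_union Set.Ioc_disjoint_Ioi_same measurableSet_Ioi hint0 hintR]
  calc _ ≤ _ := norm_add_le _ _
    _ ≤ _ := add_le_add near far
    _ = _ := by ring

theorem sch_decay (d : ℕ) (Φ : SchwartzMap ((Fin d → ℝ) × ℝ) ℂ) : ∃ M : ℝ, 0 < M ∧ ∀ y τ, ‖Φ (y,τ)‖ ≤ M * (1+‖y‖) ^ (-((d:ℝ)+1)) := by
  refine ⟨2^(d+1) * (Finset.Iic (d+1, 0)).sup (fun m => SchwartzMap.seminorm ℝ m.1 m.2) Φ + 1, by positivity, fun y τ => ?_⟩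
  have h := SchwartzMap.one_add_le_sup_seminorm_apply (𝕜 := ℝ) (m := (d+1, 0)) (k := d+1) (n := 0) le_rfl le_rfl Φ (y,τ)
  rw [norm_iteratedFDeriv_zero] at h
  have h2 : (1 + ‖y‖)^(d+1) ≤ (1 + ‖(y,τ)‖)^(d+1) := by
    gcongr
    exact norm_fst_le (y,τ)
  rw [Real.rpow_neg (by positivity), ← div_eq_mul_inv, le_div_iff₀ (by positivity), show ((d:ℝ)+1) = ((d+1 : ℕ) : ℝ) by push_cast; ring, Real.rpow_natCast, mul_comm]
  calc _ ≤ (1 + ‖(y,τ)‖)^(d+1) * ‖Φ (y,τ)‖ := by gcongr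
    _ ≤ _ := h.trans (by linarith)

theorem sch_lint (d : ℕ) (Φ : SchwartzMap ((Fin d → ℝ) × ℝ) ℂ) (p : ℝ) (hp : 1 ≤ p) : ∃ B : ℝ≥0∞, B ≠ ⊤ ∧ ∀ τ, ∫⁻ y, ‖Φ (y,τ)‖ₑ ^ p ≤ B := by
  obtain ⟨M, hM, h⟩ := sch_decay d Φ
  have hi : Integrable (fun y : Fin d → ℝ => (1+‖y‖) ^ (-((d:ℝ)+1))) := integrable_one_add_norm (by simp)
  refine ⟨∫⁻ y : Fin d → ℝ, ENNReal.ofReal (M^p * (1+‖y‖) ^ (-((d:ℝ)+1))), ?_, fun τ => lintegral_mono fun y => ?_⟩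
  · exact (hi.const_mul (M^p)).lintegral_lt_top.ne
  · rw [← ofReal_norm, ENNReal.ofReal_rpow_of_nonneg (norm_nonneg _) (by linarith)]
    apply ENNReal.ofReal_le_ofReal
    calc _ ≤ (M * (1+‖y‖) ^ (-((d:ℝ)+1)))^p := Real.rpow_le_rpow (norm_nonneg _) (h y τ) (by linarith)
      _ = M^p * ((1+‖y‖) ^ (-((d:ℝ)+1)))^p := Real.mul_rpow hM.le (by positivity)
      _ ≤ _ := by
        refine mul_le_mul_of_nonneg_left ?_ (by positivity)
        refine Real.rpow_le_self_of_le_one (by positivity) ?_ hp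
        exact Real.rpow_le_one_of_one_le_of_nonpos (by linarith [norm_nonneg y]) (by linarith [Nat.cast_nonneg (α := ℝ) d])

theorem sch_meas (d : ℕ) (Φ : SchwartzMap ((Fin d → ℝ) × ℝ) ℂ) : Measurable (fun p : (Fin d → ℝ) × ℝ => Φ (p.1, p.2)) :=
  Φ.continuous.measurable

theorem sch_int (d : ℕ) (Φ : SchwartzMap ((Fin d → ℝ) × ℝ) ℂ) (τ : ℝ) : Integrable (fun y => Φ (y,τ)) := by
  obtain ⟨B, hB, h⟩ := sch_lint d Φ 1 le_rfl
  refine ⟨(Φ.continuous.comp (by fun_prop)).aestronglyMeasurable, lt_of_le_of_lt ?_ (lt_top_iff_ne_top.2 hB)⟩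
  simpa using h τ

/-- slice norm -/
def Fn (d : ℕ) (r : ℝ) (Φ : (Fin d → ℝ) → ℝ → ℂ) (τ : ℝ) : ℝ≥0∞ := (∫⁻ y, ‖Φ y τ‖ₑ ^ r) ^ (1/r)

theorem Fn_meas (d : ℕ) (r : ℝ) (Φ : (Fin d → ℝ) → ℝ → ℂ) (h : Measurable (fun p : (Fin d → ℝ) × ℝ => Φ p.1 p.2)) : Measurable (Fn d r Φ) := by
  unfold Fn
  refine Measurable.pow_const (Measurable.lintegral_prod_left' (f := fun p : (Fin d → ℝ) × ℝ => ‖Φ p.1 p.2‖ₑ ^ r) (by fun_prop)) _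

theorem mixNorm_eq (d : ℕ) (q r : ℝ) (Φ : (Fin d → ℝ) → ℝ → ℂ) : mixNorm d q r Φ = (∫⁻ t, Fn d r Φ t ^ q) ^ (1/q) := by
  unfold mixNorm Fn
  simp_rw [← ENNReal.rpow_mul, one_div_mul_eq_div]
  rfl

/-- constant -/
def ca (a : ℝ) : ℝ := (2 : ℝ) ^ (-a) / Real.Gamma ((a + 1) / 2)

theorem ca_pos (a : ℝ) (ha : -1 < a) : 0 < ca a := by
  unfold ca
  have := Real.Gamma_pos_of_pos (show 0 < (a+1)/2 by linarith)
  positivity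

/-- unimodular factor -/
def ph (a s : ℝ) : ℂ := Complex.exp (-Complex.I * ((Real.sign s : ℝ) : ℂ) * (((a + 1) * Real.pi / 4 : ℝ) : ℂ))

theorem norm_ph (a s : ℝ) : ‖ph a s‖ = 1 := by
  rw [ph, show -Complex.I * ((Real.sign s : ℝ) : ℂ) * (((a + 1) * Real.pi / 4 : ℝ) : ℂ) = ((-(Real.sign s * ((a + 1) * Real.pi / 4)) : ℝ) : ℂ) * I by push_cast; ring,
    Complex.norm_exp_ofReal_mul_I]

theorem Sa0_eq (a z s : ℝ) : Sa0 a z s = (ca a : ℂ) * ph a s * ((|s| ^ (-((a + 1) / 2)) : ℝ) : ℂ) * cexp (((z^2 * (1/(4*s)) : ℝ) : ℂ) * I) := by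
  rw [Sa0, ca, ph]
  congr 2
  push_cast
  ring

theorem norm_Sa0 (a : ℝ) (ha : -1 < a) (z s : ℝ) : ‖Sa0 a z s‖ = ca a * |s| ^ (-((a + 1) / 2)) := by
  rw [Sa0_eq, norm_mul, norm_mul, norm_mul, norm_ph, Complex.norm_exp_ofReal_mul_I, Complex.norm_real, Complex.norm_real,
    Real.norm_of_nonneg (ca_pos a ha).le, Real.norm_of_nonneg (by positivity)]
  ring

theorem Sa0_meas (a : ℝ) : Measurable (fun p : ℝ × ℝ => Sa0 a p.1 p.2) := by
  have hsg : Measurable Real.sign := by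
    unfold Real.sign
    exact Measurable.ite measurableSet_Iio measurable_const (Measurable.ite measurableSet_Ioi measurable_const measurable_const)
  unfold Sa0
  fun_prop

theorem Theta_enorm (d : ℕ) (a : ℝ) (Φ : (Fin d → ℝ) → ℝ → ℂ) (X : (Fin d → ℝ) × ℝ) (t : ℝ) :
    ‖ThetaStar d a Φ X t‖ₑ = ‖∫ τ in Set.uIoc 0 t, Sa0 a X.2 (t - τ) * Tf d (t-τ) (fun y => Φ y τ) X.1‖ₑ := by
  rw [ThetaStar, enorm_mul, ← ofReal_norm I, norm_I, ENNReal.ofReal_one, one_mul, ← ofReal_norm, intervalIntegral.norm_intervalIntegral_eq, ofReal_norm]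
  congr 2
  ext τ
  rw [Tf, ← integral_const_mul]
  congr 1
  ext y
  ring

theorem partii (d : ℕ) (a : ℝ) (ha₁ : -1 < a)
    (q r : ℝ) (hr : 2 ≤ r) (hq : 2 < q)
    (hadm : 2 / q + (d : ℝ) / r = ((d : ℝ) + a + 1) / 2) (C : ℝ) (hC0 : 0 < C) (hC : ∀ s : ℝ, s ≠ 0 → ∀ f : (Fin d → ℝ) → ℂ, Measurable f → Integrable f →
    (∫⁻ x, ‖Tf d s f x‖ₑ ^ r) ^ (1/r) ≤ ENNReal.ofReal (C * |s| ^ (-((d:ℝ)*(1/2 - 1/r)))) * (∫⁻ y, ‖f y‖ₑ ^ (r/(r-1))) ^ (1/(r/(r-1))))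
    (Φ : SchwartzMap ((Fin d → ℝ) × ℝ) ℂ) (z : ℝ) :
    mixNorm d q r (fun x t => ThetaStar d a (fun y τ => Φ (y, τ)) (x, z) t) ≤ ENNReal.ofReal (ca a * C * hlsC q^(1/q)) *
            mixNorm d (q / (q - 1)) (r / (r - 1)) (fun y τ => Φ (y, τ)) := by
  have hca := ca_pos a ha₁
  have hr1 : 0 < r - 1 := by linarith
  have hrr : 1 ≤ r / (r-1) := by rw [le_div_iff₀ hr1]; linarith
  rw [mixNorm_eq, mixNorm_eq]
  set F := Fn d (r/(r-1)) (fun y τ => Φ (y,τ)) with hF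
  have hFm : Measurable F := Fn_meas d _ _ (sch_meas d Φ)
  have hFt : ∀ τ, F τ ≠ ⊤ := fun τ => by
    obtain ⟨B, hB, h⟩ := sch_lint d Φ (r/(r-1)) hrr
    exact ENNReal.rpow_ne_top_of_nonneg (by positivity) (lt_of_le_of_lt (h τ) (lt_top_iff_ne_top.2 hB)).ne
  have hpt : ∀ t, Fn d r (fun x t => ThetaStar d a (fun y τ => Φ (y, τ)) (x, z) t) t ≤ ENNReal.ofReal (ca a * C) * ∫⁻ τ, ENNReal.ofReal (|t-τ|^(-(2/q))) * F τ := by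
    intro t
    have hTm : Measurable (fun p : (Fin d → ℝ) × ℝ => Tf d (t - p.2) (fun y => Φ (y,p.2)) p.1) :=
      (Tf_meas2 d (fun y τ => Φ (y,τ)) (sch_meas d Φ)).comp (f := fun p : (Fin d → ℝ) × ℝ => ((p.1,t),p.2)) (by fun_prop)
    set h : (Fin d → ℝ) → ℝ → ℝ≥0∞ := fun x τ => ENNReal.ofReal (ca a * |t-τ| ^ (-((a + 1) / 2))) * ‖Tf d (t-τ) (fun y => Φ (y,τ)) x‖ₑ with hh
    have h1 : Fn d r (fun x t => ThetaStar d a (fun y τ => Φ (y, τ)) (x, z) t) t ≤ (∫⁻ x, (∫⁻ τ, h x τ)^r)^(1/r) := by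
      unfold Fn
      gcongr with x
      rw [Theta_enorm]
      refine (enorm_integral_le_lintegral_enorm _).trans ((setLIntegral_le_lintegral _ _).trans (lintegral_mono fun τ => ?_))
      rw [enorm_mul, ← ofReal_norm (Sa0 _ _ _), norm_Sa0 a ha₁]
    refine h1.trans ((mink volume volume r (by linarith) h ?_).trans ?_)
    · rw [hh]; fun_prop
    rw [← lintegral_const_mul' _ _ ENNReal.ofReal_ne_top]
    refine lintegral_mono fun τ => ?_
    have h2 : (∫⁻ x, h x τ ^ r)^(1/r) = ENNReal.ofReal (ca a * |t-τ| ^ (-((a + 1) / 2))) * (∫⁻ x, ‖Tf d (t-τ) (fun y => Φ (y,τ)) x‖ₑ ^ r)^(1/r) := by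
      simp only [hh]
      simp_rw [ENNReal.mul_rpow_of_nonneg _ _ (by linarith : 0 ≤ r)]
      rw [lintegral_const_mul' _ _ (ENNReal.rpow_ne_top_of_nonneg (by linarith) ENNReal.ofReal_ne_top), ENNReal.mul_rpow_of_nonneg _ _ (by positivity), ← ENNReal.rpow_mul, mul_one_div_cancel (by linarith), ENNReal.rpow_one]
    simp only []
    rw [h2]
    by_cases hs : t - τ = 0
    · rw [hs, abs_zero, Real.zero_rpow (by linarith)]
      simp
    have hsp : 0 < |t - τ| := abs_pos.2 hs
    refine (mul_le_mul' le_rfl (hC _ hs _ ((sch_meas d Φ).comp (f := fun y => (y,τ)) (by fun_prop)) (sch_int d Φ τ))).trans (le_of_eq ?_)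
    rw [← mul_assoc, ← mul_assoc, ← ENNReal.ofReal_mul (by positivity), ← ENNReal.ofReal_mul (by positivity)]
    congr 2
    have : -(2/q) = (-((a + 1) / 2)) + (-((d:ℝ)*(1/2 - 1/r))) := by
      have : 2/q = ((d : ℝ) + a + 1) / 2 - d / r := by linarith
      rw [this]; ring
    rw [this, Real.rpow_add hsp]
    ring
  calc _ ≤ (∫⁻ t, (ENNReal.ofReal (ca a * C) * ∫⁻ τ, ENNReal.ofReal (|t-τ|^(-(2/q))) * F τ)^q)^(1/q) := by
        gcongr with t
        exact hpt t
    _ = ENNReal.ofReal (ca a * C) * (∫⁻ t, (∫⁻ τ, ENNReal.ofReal (|t-τ|^(-(2/q))) * F τ)^q)^(1/q) := by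
        simp_rw [ENNReal.mul_rpow_of_nonneg _ _ (by linarith : 0 ≤ q)]
        rw [lintegral_const_mul' _ _ (ENNReal.rpow_ne_top_of_nonneg (by linarith) ENNReal.ofReal_ne_top), ENNReal.mul_rpow_of_nonneg _ _ (by positivity), ← ENNReal.rpow_mul, mul_one_div_cancel (by linarith), ENNReal.rpow_one]
    _ ≤ _ := by
        rw [ENNReal.ofReal_mul (p := ca a * C) (by positivity), mul_assoc]
        exact mul_le_mul' le_rfl (hls q hq F hFm hFt)

/-- weighted measure in z -/
def nuz (a : ℝ) : Measure ℝ := ((volume : Measure ℝ).restrict (Set.Ioi 0)).withDensity fun z => ENNReal.ofReal (z ^ a)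

instance (a : ℝ) : SFinite (nuz a) := by unfold nuz; infer_instance

theorem ωa_eq (d : ℕ) (a : ℝ) : ωa d a = (volume : Measure (Fin d → ℝ)).prod (nuz a) := rfl

theorem nuz_lint (a ε : ℝ) (ha : -1 < a) (hε : 0 < ε) : ∫⁻ z, ENNReal.ofReal (Real.exp (-(ε * z^2))) ∂(nuz a) < ⊤ := by
  rw [nuz, lintegral_withDensity_eq_lintegral_mul _ (by fun_prop) (by fun_prop)]
  have h := (integrableOn_rpow_mul_exp_neg_mul_sq hε ha).lintegral_lt_top
  refine lt_of_le_of_lt (setLIntegral_mono' measurableSet_Ioi fun z hz => ?_) h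
  have hz : 0 < z := hz
  simp only [Pi.mul_apply]
  rw [← ENNReal.ofReal_mul (by positivity), neg_mul]

theorem nuz_int (a ε β : ℝ) : ∫ z, (Real.exp (-(ε * z^2)) : ℂ) * cexp (((z^2 * β : ℝ) : ℂ) * I) ∂(nuz a) =
    ∫ z in Set.Ioi (0:ℝ), ((z ^ a : ℝ) : ℂ) * cexp (-((ε:ℂ) - β * I) * (z:ℂ)^2) := by
  have : nuz a = ((volume : Measure ℝ).restrict (Set.Ioi 0)).withDensity fun z => ((Real.toNNReal (z ^ a) : ℝ≥0) : ℝ≥0∞) := rfl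
  rw [this, integral_withDensity_eq_integral_smul (by fun_prop)]
  refine setIntegral_congr_fun measurableSet_Ioi fun z hz => ?_
  have hz : 0 < z := hz
  rw [NNReal.smul_def, Real.coe_toNNReal _ (by positivity), Complex.real_smul]
  congr 1
  rw [Complex.ofReal_exp, ← Complex.exp_add]
  congr 1
  push_cast
  ring

/-- full integrand -/
def Gi (d : ℕ) (a : ℝ) (Φ : (Fin d → ℝ) → ℝ → ℂ) (t ε : ℝ) (X : (Fin d → ℝ) × ℝ) (p : ℝ × ℝ) : ℂ :=
  (Real.exp (-(ε * X.2^2)) : ℂ) * ((Sa0 a X.2 (t - p.1) * Tf d (t - p.1) (fun y => Φ y p.1) X.1) *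
    (starRingEnd ℂ) (Sa0 a X.2 (t - p.2) * Tf d (t - p.2) (fun y => Φ y p.2) X.1))

theorem Gi_meas (d : ℕ) (a : ℝ) (Φ : (Fin d → ℝ) → ℝ → ℂ) (hΦ : Measurable (fun p : (Fin d → ℝ) × ℝ => Φ p.1 p.2)) (t ε : ℝ) :
    Measurable (fun P : ((Fin d → ℝ) × ℝ) × (ℝ × ℝ) => Gi d a Φ t ε P.1 P.2) := by
  have hT := Tf_meas2 d Φ hΦ
  have hS := Sa0_meas a
  unfold Gi
  refine Measurable.mul (by fun_prop) (Measurable.mul (Measurable.mul ?_ ?_) (Complex.continuous_conj.measurable.comp (Measurable.mul ?_ ?_)))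
  · exact hS.comp (f := fun P : ((Fin d → ℝ) × ℝ) × (ℝ × ℝ) => (P.1.2, t - P.2.1)) (by fun_prop)
  · exact hT.comp (f := fun P : ((Fin d → ℝ) × ℝ) × (ℝ × ℝ) => ((P.1.1, t), P.2.1)) (by fun_prop)
  · exact hS.comp (f := fun P : ((Fin d → ℝ) × ℝ) × (ℝ × ℝ) => (P.1.2, t - P.2.2)) (by fun_prop)
  · exact hT.comp (f := fun P : ((Fin d → ℝ) × ℝ) × (ℝ × ℝ) => ((P.1.1, t), P.2.2)) (by fun_prop)

theorem J_lint (a t : ℝ) (ha : a < 1) : ∫⁻ τ in Set.uIoc 0 t, ENNReal.ofReal (|t - τ| ^ (-((a+1)/2))) < ⊤ := by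
  have h1 : IntervalIntegrable (fun x : ℝ => |x| ^ (-((a+1)/2))) volume t 0 := by
    have hpos : ∀ T : ℝ, 0 ≤ T → IntervalIntegrable (fun x : ℝ => |x| ^ (-((a+1)/2))) volume T 0 := fun T hT => by
      refine (intervalIntegral.intervalIntegrable_rpow' (r := -((a+1)/2)) (by linarith) (a := T) (b := 0)).congr ?_
      intro x hx
      rw [Set.uIoc_of_ge hT] at hx
      simp only []
      rw [abs_of_pos hx.1]
    rcases le_total 0 t with h | h
    · exact hpos t h
    · have := hpos (-t) (by linarith)
      rw [IntervalIntegrable.iff_comp_neg]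
      simpa using this
  have h2 : IntervalIntegrable (fun x : ℝ => |t - x| ^ (-((a+1)/2))) volume 0 t := by
    simpa using h1.comp_sub_left t
  rw [intervalIntegrable_iff] at h2
  exact h2.lintegral_lt_top

theorem Gi_int (d : ℕ) (a : ℝ) (ha : -1 < a) (ha1 : a < 1) (Φ : SchwartzMap ((Fin d → ℝ) × ℝ) ℂ) (t ε : ℝ) (hε : 0 < ε) :
    Integrable (fun P : ((Fin d → ℝ) × ℝ) × (ℝ × ℝ) => Gi d a (fun y τ => Φ (y,τ)) t ε P.1 P.2)
      ((ωa d a).prod ((volume.restrict (Set.uIoc 0 t)).prod (volume.restrict (Set.uIoc 0 t)))) := by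
  have hm := Gi_meas d a (fun y τ => Φ (y,τ)) (sch_meas d Φ) t ε
  have hca := ca_pos a ha
  obtain ⟨M, hM, hMb⟩ := sch_lint d Φ 2 (by norm_num)
  have hsm : ∀ τ, Measurable (fun y => Φ (y,τ)) := fun τ => (sch_meas d Φ).comp (f := fun y => (y,τ)) (by fun_prop)
  have hZ := nuz_lint a ε ha hε
  set Z := ∫⁻ z, ENNReal.ofReal (Real.exp (-(ε * z^2))) ∂(nuz a)
  have hJ := J_lint a t ha1
  set J := ∫⁻ τ in Set.uIoc 0 t, ENNReal.ofReal (|t - τ| ^ (-((a+1)/2)))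
  refine ⟨hm.aestronglyMeasurable, ?_⟩
  rw [hasFiniteIntegral_iff_enorm, ωa_eq, lintegral_prod_symm' _ (by fun_prop)]
  have hp : ∀ p : ℝ × ℝ, ∫⁻ X, ‖Gi d a (fun y τ => Φ (y,τ)) t ε X p‖ₑ ∂((volume : Measure (Fin d → ℝ)).prod (nuz a)) ≤
      (ENNReal.ofReal (ca a)^2 * M * Z) * (ENNReal.ofReal (|t - p.1| ^ (-((a+1)/2))) * ENNReal.ofReal (|t - p.2| ^ (-((a+1)/2)))) := by
    intro p
    have e : ∀ X, ‖Gi d a (fun y τ => Φ (y,τ)) t ε X p‖ₑ = (ENNReal.ofReal (ca a)^2 * (ENNReal.ofReal (|t - p.1| ^ (-((a+1)/2))) * ENNReal.ofReal (|t - p.2| ^ (-((a+1)/2))))) *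
      ((‖Tf d (t - p.1) (fun y => Φ (y, p.1)) X.1‖ₑ * ‖Tf d (t - p.2) (fun y => Φ (y, p.2)) X.1‖ₑ) * ENNReal.ofReal (Real.exp (-(ε * X.2^2)))) := by
      intro X
      rw [Gi, enorm_mul, enorm_mul, RCLike.enorm_conj, enorm_mul, enorm_mul, ← ofReal_norm (Sa0 _ _ _), ← ofReal_norm (Sa0 _ _ _), norm_Sa0 a ha, norm_Sa0 a ha,
        ENNReal.ofReal_mul hca.le, ENNReal.ofReal_mul hca.le, ← ofReal_norm (((Real.exp _ : ℝ) : ℂ)), Complex.norm_real, Real.norm_of_nonneg (Real.exp_pos _).le]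
      ring
    simp_rw [e]
    have hT1 := Tf_meas d (t-p.1) _ (hsm p.1)
    have hT2 := Tf_meas d (t-p.2) _ (hsm p.2)
    rw [lintegral_const_mul _ (by fun_prop), lintegral_prod_mul (f := fun x => ‖Tf d (t - p.1) (fun y => Φ (y, p.1)) x‖ₑ * ‖Tf d (t - p.2) (fun y => Φ (y, p.2)) x‖ₑ) (g := fun z => ENNReal.ofReal (Real.exp (-(ε * z^2)))) (by fun_prop) (by fun_prop)]
    by_cases h1 : t - p.1 = 0
    · rw [h1, abs_zero, Real.zero_rpow (by linarith)]; simp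
    by_cases h2 : t - p.2 = 0
    · rw [h2, abs_zero, Real.zero_rpow (by linarith)]; simp
    have := lint_cs volume _ _ hT1 hT2 M ((Tf_L2 d _ h1 _ (hsm _) (sch_int d Φ _)).trans (hMb _)) ((Tf_L2 d _ h2 _ (hsm _) (sch_int d Φ _)).trans (hMb _))
    calc _ ≤ (ENNReal.ofReal (ca a)^2 * (ENNReal.ofReal (|t - p.1| ^ (-((a+1)/2))) * ENNReal.ofReal (|t - p.2| ^ (-((a+1)/2))))) * (M * Z) :=
          mul_le_mul' le_rfl (mul_le_mul' this le_rfl)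
      _ = _ := by ring
  refine lt_of_le_of_lt (lintegral_mono hp) ?_
  rw [lintegral_const_mul _ (by fun_prop), lintegral_prod_mul (f := fun τ => ENNReal.ofReal (|t - τ| ^ (-((a+1)/2)))) (g := fun τ => ENNReal.ofReal (|t - τ| ^ (-((a+1)/2)))) (by fun_prop) (by fun_prop)]
  refine ENNReal.mul_lt_top (ENNReal.mul_lt_top (ENNReal.mul_lt_top (by simp) (lt_top_iff_ne_top.2 hM)) hZ) (ENNReal.mul_lt_top hJ hJ)

theorem Gi_inner (d : ℕ) (a : ℝ) (ha : -1 < a) (ha1 : a < 1)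
    (q r : ℝ) (hr : 2 ≤ r)
    (hadm : 2 / q + (d : ℝ) / r = ((d : ℝ) + a + 1) / 2) (C : ℝ) (hC0 : 0 < C) (hC : ∀ s : ℝ, s ≠ 0 → ∀ f : (Fin d → ℝ) → ℂ, Measurable f → Integrable f →
    (∫⁻ x, ‖Tf d s f x‖ₑ ^ r) ^ (1/r) ≤ ENNReal.ofReal (C * |s| ^ (-((d:ℝ)*(1/2 - 1/r)))) * (∫⁻ y, ‖f y‖ₑ ^ (r/(r-1))) ^ (1/(r/(r-1))))
    (Φ : SchwartzMap ((Fin d → ℝ) × ℝ) ℂ) (t ε : ℝ) (hε : 0 < ε) (p : ℝ × ℝ) (hp : p.1 ≠ p.2) :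
    ‖∫ X, Gi d a (fun y τ => Φ (y,τ)) t ε X p ∂(ωa d a)‖ₑ ≤
      ENNReal.ofReal (ca a ^2 * (1/(a+1)+1) * 4^((a+1)/2) * C) * (ENNReal.ofReal (|p.1 - p.2|^(-(2/q))) * (Fn d (r/(r-1)) (fun y τ => Φ (y,τ)) p.1 * Fn d (r/(r-1)) (fun y τ => Φ (y,τ)) p.2)) := by
  have hca := ca_pos a ha
  have hsm : ∀ τ, Measurable (fun y => Φ (y,τ)) := fun τ => (sch_meas d Φ).comp (f := fun y => (y,τ)) (by fun_prop)
  obtain ⟨M, hM, hMb⟩ := sch_lint d Φ 2 (by norm_num)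
  by_cases h1 : t - p.1 = 0
  · have : ∀ X, Gi d a (fun y τ => Φ (y,τ)) t ε X p = 0 := fun X => by
      rw [Gi, Sa0_eq, h1, abs_zero, Real.zero_rpow (by linarith)]; simp
    simp [this]
  by_cases h2 : t - p.2 = 0
  · have : ∀ X, Gi d a (fun y τ => Φ (y,τ)) t ε X p = 0 := fun X => by
      rw [Gi, Sa0_eq _ _ (t - p.2), h2, abs_zero, Real.zero_rpow (by linarith)]; simp
    simp [this]
  have h12 : t - p.1 ≠ t - p.2 := fun h => hp (by linarith)
  have hdiff : |t - p.1 - (t - p.2)| = |p.1 - p.2| := by rw [← abs_neg]; congr 1; ring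
  have pr := pairing d r hr C hC (t-p.1) (t-p.2) h1 h2 h12 _ _ (hsm p.1) (hsm p.2) (sch_int d Φ p.1) (sch_int d Φ p.2)
    (lt_of_le_of_lt (hMb _) (lt_top_iff_ne_top.2 hM)) (lt_of_le_of_lt (hMb _) (lt_top_iff_ne_top.2 hM))
  rw [hdiff] at pr
  set s := t - p.1 with hs
  set s' := t - p.2 with hs'
  set β : ℝ := 1/(4*s) - 1/(4*s') with hβ
  have a1 : 0 < |s| := abs_pos.2 h1
  have a2 : 0 < |s'| := abs_pos.2 h2
  have a3 : 0 < |p.1 - p.2| := abs_pos.2 (sub_ne_zero.2 hp)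
  have hβa : |β| = |p.1 - p.2| / (4 * (|s| * |s'|)) := by
    rw [hβ, show 1/(4*s) - 1/(4*s') = -((s - s')/(4 * (s * s'))) by field_simp; ring, abs_neg, abs_div, abs_mul, abs_mul, hdiff]
    norm_num
  have hβ0 : β ≠ 0 := by
    rw [← abs_pos, hβa]; positivity
  have zb := zker_bound a ha ha1 ε β hε hβ0
  set K0 : ℂ := ((ca a : ℂ) * ph a s * ((|s| ^ (-((a + 1) / 2)) : ℝ) : ℂ)) * (starRingEnd ℂ) ((ca a : ℂ) * ph a s' * ((|s'| ^ (-((a + 1) / 2)) : ℝ) : ℂ)) with hK0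
  have nK0 : ‖K0‖ = ca a ^ 2 * (|s| * |s'|) ^ (-((a+1)/2)) := by
    rw [hK0]
    simp only [norm_mul, RCLike.norm_conj, norm_ph, Complex.norm_real]
    rw [Real.norm_of_nonneg hca.le, Real.norm_of_nonneg (by positivity), Real.norm_of_nonneg (by positivity), Real.mul_rpow (by positivity) (by positivity)]
    ring
  have e : ∀ X, Gi d a (fun y τ => Φ (y,τ)) t ε X p = K0 * ((Tf d s (fun y => Φ (y,p.1)) X.1 * (starRingEnd ℂ) (Tf d s' (fun y => Φ (y,p.2)) X.1)) *
      ((Real.exp (-(ε * X.2^2)) : ℂ) * cexp (((X.2^2 * β : ℝ) : ℂ) * I))) := by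
    intro X
    have e1 : cexp (((X.2^2 * β : ℝ) : ℂ) * I) = cexp (((X.2^2 * (1/(4*s)) : ℝ) : ℂ) * I) * (starRingEnd ℂ) (cexp (((X.2^2 * (1/(4*s')) : ℝ) : ℂ) * I)) := by
      rw [← Complex.exp_conj, ← Complex.exp_add]
      congr 1
      simp only [map_mul, conj_ofReal, conj_I]
      rw [hβ]; push_cast; ring
    rw [Gi, Sa0_eq, Sa0_eq, e1, hK0, ← hs, ← hs']
    simp only [map_mul]
    ring
  clear_value K0
  simp_rw [e]
  rw [integral_const_mul, ωa_eq, integral_prod_mul (f := fun x => Tf d s (fun y => Φ (y,p.1)) x * (starRingEnd ℂ) (Tf d s' (fun y => Φ (y,p.2)) x))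
    (g := fun z : ℝ => (Real.exp (-(ε * z^2)) : ℂ) * cexp (((z^2 * β : ℝ) : ℂ) * I)), nuz_int, enorm_mul, enorm_mul, ← ofReal_norm K0, nK0]
  have zb' := ENNReal.ofReal_le_ofReal zb
  rw [ofReal_norm] at zb'
  refine (mul_le_mul' le_rfl (mul_le_mul' pr zb')).trans (le_of_eq ?_)
  unfold Fn
  have ee : ∀ A B D X Y : ℝ≥0∞, A * (B * X * Y * D) = (A * B * D) * (X * Y) := fun A B D X Y => by ring
  have ha0 : 0 < a + 1 := by linarith
  rw [ee, ← mul_assoc _ (ENNReal.ofReal (|p.1 - p.2| ^ (-(2/q)))), ← ENNReal.ofReal_mul (by positivity), ← ENNReal.ofReal_mul (by positivity), ← ENNReal.ofReal_mul (by positivity)]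
  congr 2
  have e3 : -(2/q) = (-((a + 1) / 2)) + (-((d:ℝ)*(1/2 - 1/r))) := by
    have : 2/q = ((d : ℝ) + a + 1) / 2 - d / r := by linarith
    rw [this]; ring
  have e4 : (|s| * |s'|) ^ (-((a+1)/2)) * |β| ^ (-((a+1)/2)) = 4^((a+1)/2) * |p.1 - p.2| ^ (-((a+1)/2)) := by
    rw [hβa, ← Real.mul_rpow (by positivity) (by positivity), show (|s| * |s'|) * (|p.1 - p.2| / (4 * (|s| * |s'|))) = 4⁻¹ * |p.1 - p.2| by field_simp,
      Real.mul_rpow (by positivity) (by positivity), Real.rpow_neg (x := (4⁻¹ : ℝ)) (by positivity), Real.inv_rpow (by positivity), inv_inv]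
  rw [e3, Real.rpow_add a3]
  linear_combination (ca a ^2 * (C * |p.1 - p.2| ^ (-((d:ℝ)*(1/2 - 1/r)))) * (1/(a+1)+1)) * e4

theorem parti (d : ℕ) (a : ℝ) (ha : -1 < a) (ha1 : a < 1)
    (q r : ℝ) (hr : 2 ≤ r) (hq : 2 < q)
    (hadm : 2 / q + (d : ℝ) / r = ((d : ℝ) + a + 1) / 2) (C : ℝ) (hC0 : 0 < C) (hC : ∀ s : ℝ, s ≠ 0 → ∀ f : (Fin d → ℝ) → ℂ, Measurable f → Integrable f →
    (∫⁻ x, ‖Tf d s f x‖ₑ ^ r) ^ (1/r) ≤ ENNReal.ofReal (C * |s| ^ (-((d:ℝ)*(1/2 - 1/r)))) * (∫⁻ y, ‖f y‖ₑ ^ (r/(r-1))) ^ (1/(r/(r-1))))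
    (Φ : SchwartzMap ((Fin d → ℝ) × ℝ) ℂ) (t : ℝ) :
    eLpNorm (fun X => ThetaStar d a (fun y τ => Φ (y, τ)) X t) 2 (ωa d a) ≤
      ENNReal.ofReal ((ca a ^2 * (1/(a+1)+1) * 4^((a+1)/2) * C * hlsC q^(1/q))^(1/(2:ℝ))) *
            mixNorm d (q / (q - 1)) (r / (r - 1)) (fun y τ => Φ (y, τ)) := by
  have hca := ca_pos a ha
  have ha0 : 0 < a + 1 := by linarith
  have hr1 : 0 < r - 1 := by linarith
  have hrr : 1 ≤ r / (r-1) := by rw [le_div_iff₀ hr1]; linarith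
  rw [mixNorm_eq]
  set F := Fn d (r/(r-1)) (fun y τ => Φ (y,τ)) with hF
  have hFm : Measurable F := Fn_meas d _ _ (sch_meas d Φ)
  have hFt : ∀ τ, F τ ≠ ⊤ := fun τ => by
    obtain ⟨B, hB, h⟩ := sch_lint d Φ (r/(r-1)) hrr
    exact ENNReal.rpow_ne_top_of_nonneg (by positivity) (lt_of_le_of_lt (h τ) (lt_top_iff_ne_top.2 hB)).ne
  set N := (∫⁻ t, F t ^ (q/(q-1))) ^ (1/(q/(q-1))) with hN
  set K := ca a ^2 * (1/(a+1)+1) * 4^((a+1)/2) * C with hK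
  have hKp : 0 < K := by positivity
  set V : (Fin d → ℝ) × ℝ → ℂ := fun X => ∫ τ in Set.uIoc 0 t, Sa0 a X.2 (t - τ) * Tf d (t-τ) (fun y => Φ (y,τ)) X.1 with hV
  have hVm : Measurable V := by
    have : StronglyMeasurable (fun P : ((Fin d → ℝ) × ℝ) × ℝ => Sa0 a P.1.2 (t - P.2) * Tf d (t-P.2) (fun y => Φ (y,P.2)) P.1.1) := by
      refine Measurable.stronglyMeasurable (Measurable.mul ?_ ?_)
      · exact (Sa0_meas a).comp (f := fun P : ((Fin d → ℝ) × ℝ) × ℝ => (P.1.2, t - P.2)) (by fun_prop)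
      · exact (Tf_meas2 d (fun y τ => Φ (y,τ)) (sch_meas d Φ)).comp (f := fun P : ((Fin d → ℝ) × ℝ) × ℝ => ((P.1.1, t), P.2)) (by fun_prop)
    exact this.integral_prod_right.measurable
  have hbd : ∀ ε, 0 < ε → ∫⁻ X, ENNReal.ofReal (Real.exp (-(ε * X.2^2))) * ‖V X‖ₑ ^ (2:ℝ) ∂(ωa d a) ≤ ENNReal.ofReal (K * hlsC q^(1/q)) * N ^ (2:ℝ) := by
    intro ε hε
    have hGi := Gi_int d a ha ha1 Φ t ε hε
    have eV : ∀ X, ∫ p, Gi d a (fun y τ => Φ (y,τ)) t ε X p ∂((volume.restrict (Set.uIoc 0 t)).prod (volume.restrict (Set.uIoc 0 t))) =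
        ((Real.exp (-(ε * X.2^2)) * ‖V X‖^2 : ℝ) : ℂ) := by
      intro X
      simp only [Gi]
      rw [integral_const_mul, integral_prod_mul (f := fun τ => Sa0 a X.2 (t - τ) * Tf d (t-τ) (fun y => Φ (y,τ)) X.1) (g := fun τ => (starRingEnd ℂ) (Sa0 a X.2 (t - τ) * Tf d (t-τ) (fun y => Φ (y,τ)) X.1)),
        integral_conj, mul_conj, normSq_eq_norm_sq]
      push_cast
      rfl
    have hsf : SFinite (ωa d a) := by rw [ωa_eq]; infer_instance
    have hVi : Integrable (fun X => Real.exp (-(ε * X.2^2)) * ‖V X‖^2) (ωa d a) := by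
      have := hGi.integral_prod_left
      simp_rw [eV] at this
      have := this.re
      simpa only [RCLike.re_to_complex, Complex.ofReal_re] using this
    have e1 : ∫⁻ X, ENNReal.ofReal (Real.exp (-(ε * X.2^2))) * ‖V X‖ₑ ^ (2:ℝ) ∂(ωa d a) =
       ‖∫ X, ∫ p, Gi d a (fun y τ => Φ (y,τ)) t ε X p ∂((volume.restrict (Set.uIoc 0 t)).prod (volume.restrict (Set.uIoc 0 t))) ∂(ωa d a)‖ₑ := by
      simp_rw [eV]
      rw [integral_complex_ofReal, ← ofReal_norm, Complex.norm_real,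
        Real.norm_of_nonneg (integral_nonneg fun x => by positivity), ofReal_integral_eq_lintegral_ofReal hVi (Eventually.of_forall fun x => by positivity)]
      refine lintegral_congr fun x => ?_
      rw [ENNReal.ofReal_mul (by positivity), ← ofReal_norm, ENNReal.ofReal_rpow_of_nonneg (norm_nonneg _) (by norm_num), Real.rpow_two]
    rw [e1, integral_integral_swap hGi]
    refine (enorm_integral_le_lintegral_enorm _).trans ?_
    set H : ℝ × ℝ → ℝ≥0∞ := fun p => ENNReal.ofReal K * (ENNReal.ofReal (|p.1 - p.2|^(-(2/q))) * (F p.1 * F p.2)) with hH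
    have hHm : Measurable H := by rw [hH]; fun_prop
    have hae : ∀ᵐ p ∂((volume.restrict (Set.uIoc 0 t)).prod (volume.restrict (Set.uIoc 0 t))), p.1 ≠ p.2 := by
      have hms : MeasurableSet {p : ℝ × ℝ | p.1 ≠ p.2} := (measurableSet_eq_fun measurable_fst measurable_snd).compl
      rw [Measure.ae_prod_iff_ae_ae hms]
      refine Eventually.of_forall fun x => ae_restrict_of_ae ?_
      have : ∀ᵐ y : ℝ, y ≠ x := by simp [ae_iff]
      filter_upwards [this] with y hy using hy.symm
    have hle : ∫⁻ p, ‖∫ X, Gi d a (fun y τ => Φ (y,τ)) t ε X p ∂(ωa d a)‖ₑ ∂((volume.restrict (Set.uIoc 0 t)).prod (volume.restrict (Set.uIoc 0 t))) ≤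
        ∫⁻ p, H p ∂((volume.restrict (Set.uIoc 0 t)).prod (volume.restrict (Set.uIoc 0 t))) := by
      refine lintegral_mono_ae ?_
      filter_upwards [hae] with p hp
      exact Gi_inner d a ha ha1 q r hr hadm C hC0 hC Φ t ε hε p hp
    refine hle.trans ?_
    have hh : Real.HolderConjugate (q/(q-1)) q := (Real.HolderConjugate.conjExponent (by linarith)).symm
    have hIm : Measurable (fun x => ∫⁻ y, ENNReal.ofReal (|x - y|^(-(2/q))) * F y) := by
      exact Measurable.lintegral_prod_right' (f := fun p : ℝ × ℝ => ENNReal.ofReal (|p.1 - p.2|^(-(2/q))) * F p.2) (by fun_prop)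
    rw [lintegral_prod _ hHm.aemeasurable]
    calc _ ≤ ∫⁻ x, ∫⁻ y, H (x,y) := (setLIntegral_le_lintegral _ _).trans (lintegral_mono fun x => setLIntegral_le_lintegral _ _)
      _ = ENNReal.ofReal K * ∫⁻ x, F x * ∫⁻ y, ENNReal.ofReal (|x - y|^(-(2/q))) * F y := by
          rw [← lintegral_const_mul _ (by fun_prop)]
          refine lintegral_congr fun x => ?_
          rw [← lintegral_const_mul' _ _ (hFt x), ← lintegral_const_mul' _ _ ENNReal.ofReal_ne_top]
          refine lintegral_congr fun y => ?_
          simp only [hH]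
          ring
      _ ≤ ENNReal.ofReal K * (N * (ENNReal.ofReal (hlsC q^(1/q)) * N)) := by
          refine mul_le_mul' le_rfl ((ENNReal.lintegral_mul_le_Lp_mul_Lq volume hh hFm.aemeasurable hIm.aemeasurable).trans ?_)
          exact mul_le_mul' le_rfl (hls q hq F hFm hFt)
      _ = _ := by
          rw [ENNReal.ofReal_mul hKp.le, ENNReal.rpow_two]
          ring
  have fin := fatou_w (ωa d a) (fun X => X.2^2) (by fun_prop) (fun X => ‖V X‖ₑ ^ (2:ℝ)) (by fun_prop) _ hbd
  have e : eLpNorm (fun X => ThetaStar d a (fun y τ => Φ (y, τ)) X t) 2 (ωa d a) = (∫⁻ X, ‖V X‖ₑ ^ (2:ℝ) ∂(ωa d a)) ^ (1/(2:ℝ)) := by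
    rw [eLpNorm_eq_lintegral_rpow_enorm_toReal (by norm_num) (by norm_num)]
    simp only [ENNReal.toReal_ofNat, Theta_enorm]
    rfl
  rw [e]
  refine (ENNReal.rpow_le_rpow fin (by norm_num)).trans (le_of_eq ?_)
  have := hlsC_pos q hq
  rw [ENNReal.mul_rpow_of_nonneg _ _ (by norm_num), ← ENNReal.rpow_mul, ENNReal.ofReal_rpow_of_nonneg (mul_nonneg hKp.le (by positivity)) (by norm_num)]
  norm_num

/-- Boundary Strichartz estimates: for `-1 < a < 1`, `r ≥ 2`, `q > 2` with
`2/q + d/r = (d+a+1)/2`, there is `C > 0` such that for every Schwartz `Φ`: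
(i) `sup_t ‖Θ_a^*(Φ)(·,t)‖_{L²_a} ≤ C ‖Φ‖_{L^{q'}_t L^{r'}_x}`, and
(ii) `sup_{z>0} ‖Θ_a^*(Φ)(·,z,·)‖_{L^q_t L^r_x} ≤ C ‖Φ‖_{L^{q'}_t L^{r'}_x}`. -/
theorem boundary_strichartz
    (d : ℕ) (hd : 1 ≤ d) (a : ℝ) (ha₁ : -1 < a) (ha₂ : a < 1)
    (q r : ℝ) (hr : 2 ≤ r) (hq : 2 < q)
    (hadm : 2 / q + (d : ℝ) / r = ((d : ℝ) + a + 1) / 2) :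
    ∃ C > (0 : ℝ), ∀ Φ : SchwartzMap ((Fin d → ℝ) × ℝ) ℂ,
      (⨆ t : ℝ,
          eLpNorm (fun X => ThetaStar d a (fun y τ => Φ (y, τ)) X t) 2 (ωa d a))
        ≤ ENNReal.ofReal C *
            mixNorm d (q / (q - 1)) (r / (r - 1)) (fun y τ => Φ (y, τ)) ∧
      (⨆ (z : ℝ) (_ : 0 < z),
          mixNorm d q r (fun x t => ThetaStar d a (fun y τ => Φ (y, τ)) (x, z) t))
        ≤ ENNReal.ofReal C *
            mixNorm d (q / (q - 1)) (r / (r - 1)) (fun y τ => Φ (y, τ)) := by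
  obtain ⟨C, hC0, hC⟩ := dispersive d r hr
  have h1 := ca_pos a ha₁
  have h2 := hlsC_pos q hq
  have h3 : 0 < ca a * C * hlsC q ^ (1 / q) := by positivity
  refine ⟨max ((ca a ^2 * (1/(a+1)+1) * 4^((a+1)/2) * C * hlsC q^(1/q))^(1/(2:ℝ)))
    (ca a * C * hlsC q ^ (1 / q)), lt_max_of_lt_right h3, fun Φ => ⟨iSup_le fun t => ?_,
    iSup_le fun z => iSup_le fun _ => ?_⟩⟩
  · exact (parti d a ha₁ ha₂ q r hr hq hadm C hC0 hC Φ t).trans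
      (mul_le_mul' (ENNReal.ofReal_le_ofReal (le_max_left _ _)) le_rfl)
  · exact (partii d a ha₁ q r hr hq hadm C hC0 hC Φ z).trans
      (mul_le_mul' (ENNReal.ofReal_le_ofReal (le_max_right _ _)) le_rfl)

end
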